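/- arXiv:1104.4562 — 4 statements merged into one kernel-verified Lean document; each statement's English description precedes it below -/
import Mathlib

section
/- Let γ ∈ [0,1) and let O ⊆ ℝ² be a nonempty bounded, simply connected open set with C^∞ smooth boundary. If u is a γ-torsion function of O, then ∫_O u^{1+γ} dA ≤ ((1+γ)/(8π)) · (∫_O u^γ dA)². (This is the Euclidean case τ = 4π of the paper's optimal isoperimetric inequality (2.1).) -/
open MeasureTheory Real

/-- The Euclidean Laplacian on `ℝ²` (realized as `EuclideanSpace ℝ (Fin 2)`). -/
noncomputable def lap (u : EuclideanSpace ℝ (Fin 2) → ℝ) (x : EuclideanSpace ℝ (Fin 2)) : ℝ :=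
  ∑ i : Fin 2, fderiv ℝ (fderiv ℝ u) x (EuclideanSpace.single i 1) (EuclideanSpace.single i 1)

/-- `O` has `C^∞` smooth boundary: near each boundary point, `O` is the sublevel set of a
smooth function with nonvanishing gradient. -/
def SmoothBoundary (O : Set (EuclideanSpace ℝ (Fin 2))) : Prop :=
  ∀ x ∈ frontier O, ∃ (U : Set (EuclideanSpace ℝ (Fin 2))) (φ : EuclideanSpace ℝ (Fin 2) → ℝ),
    IsOpen U ∧ x ∈ U ∧ ContDiff ℝ (⊤ : ℕ∞) φ ∧ (∀ y ∈ U, fderiv ℝ φ y ≠ 0) ∧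
      O ∩ U = {y | φ y < 0} ∩ U

/-- `u` is a `γ`-torsion function of `O`: continuous on the closure, `C¹` up to the boundary,
`C²` inside, with `Δu = -u^γ`, `u > 0` in `O` and `u = 0` on `∂O`. -/
def IsTorsionFn (γ : ℝ) (O : Set (EuclideanSpace ℝ (Fin 2)))
    (u : EuclideanSpace ℝ (Fin 2) → ℝ) : Prop :=
  ContinuousOn u (closure O) ∧ ContDiffOn ℝ 1 u (closure O) ∧ ContDiffOn ℝ 2 u O ∧
  (∀ x ∈ O, lap u x = -(u x ^ γ)) ∧ (∀ x ∈ O, 0 < u x) ∧ (∀ x ∈ frontier O, u x = 0)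

open scoped Pointwise ENNReal

lemma bm1_compact (K L : Set ℝ) (hK : IsCompact K) (hL : IsCompact L) (hKn : K.Nonempty)
    (hLn : L.Nonempty) : volume K + volume L ≤ volume (K + L) := by
  obtain ⟨a, ha⟩ := hK.exists_isGreatest hKn
  obtain ⟨b, hb⟩ := hL.exists_isLeast hLn
  have h1 : (K + {b}) ∪ ({a} + L) ⊆ K + L :=
    Set.union_subset (Set.add_subset_add_left (by simpa using hb.1))
      (Set.add_subset_add_right (by simpa using ha.1))
  have hd : AEDisjoint volume (K + {b}) ({a} + L) := by
    apply measure_mono_null (t := {a + b}) _ (by simp)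
    rintro x ⟨⟨k, hk, b', hb', rfl⟩, ⟨a', ha', l, hl, h⟩⟩
    simp only [Set.mem_singleton_iff] at hb' ha' ⊢
    subst hb' ha'
    have := ha.2 hk
    have := hb.2 hl
    simp only at h ⊢
    linarith
  have hm : NullMeasurableSet ({a} + L) volume :=
    (isCompact_singleton.add hL).measurableSet.nullMeasurableSet
  calc volume K + volume L = volume (K + {b}) + volume ({a} + L) := by
        congr 1
        · rw [Set.add_singleton]; simp [measure_preimage_add_right]
        · rw [Set.singleton_add]; simp
    _ = volume ((K + {b}) ∪ ({a} + L)) := (measure_union₀ hm hd).symm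
    _ ≤ _ := measure_mono h1

lemma bm1 (A B : Set ℝ) (hA : IsOpen A) (hB : IsOpen B) (hAn : A.Nonempty)
    (hBn : B.Nonempty) : volume A + volume B ≤ volume (A + B) := by
  obtain ⟨a, ha⟩ := hAn
  obtain ⟨b, hb⟩ := hBn
  rw [hA.measure_eq_iSup_isCompact volume, hB.measure_eq_iSup_isCompact volume]
  simp only [iSup_and']
  refine ENNReal.biSup_add_biSup_le' (p := fun K => K ⊆ A ∧ IsCompact K)
    (q := fun K => K ⊆ B ∧ IsCompact K) ⟨∅, by simp⟩ ⟨∅, by simp⟩ ?_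
  rintro K ⟨hKA, hK⟩ L ⟨hLB, hL⟩
  calc volume K + volume L ≤ volume (insert a K) + volume (insert b L) := by
        gcongr <;> simp
    _ ≤ volume (insert a K + insert b L) :=
        bm1_compact _ _ (hK.insert a) (hL.insert b) (by simp) (by simp)
    _ ≤ _ := measure_mono (Set.add_subset_add (Set.insert_subset ha hKA) (Set.insert_subset hb hLB))
open scoped Pointwise ENNReal

/-- length of the vertical section -/
noncomputable def secLen (A : Set (ℝ × ℝ)) (x : ℝ) : ℝ := (volume (Prod.mk x ⁻¹' A)).toReal

lemma sec_ne_top {A : Set (ℝ × ℝ)} (hb : Bornology.IsBounded A) (x : ℝ) :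
    volume (Prod.mk x ⁻¹' A) ≠ ∞ := by
  have : Prod.mk x ⁻¹' A ⊆ Prod.snd '' A := fun y hy => ⟨(x, y), hy, rfl⟩
  exact ((hb.image_snd.subset this).measure_lt_top).ne

lemma sec_open {A : Set (ℝ × ℝ)} (hA : IsOpen A) (x : ℝ) : IsOpen (Prod.mk x ⁻¹' A) :=
  hA.preimage (by fun_prop)

lemma secLen_open {A : Set (ℝ × ℝ)} (hA : IsOpen A) (hb : Bornology.IsBounded A) {t : ℝ}
    (ht : 0 ≤ t) : IsOpen {x | t < secLen A x} := by
  rw [isOpen_iff_mem_nhds]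
  intro x hx
  have hx' : ENNReal.ofReal t < volume (Prod.mk x ⁻¹' A) :=
    (ENNReal.ofReal_lt_iff_lt_toReal ht (sec_ne_top hb x)).2 hx
  obtain ⟨K, hKA, hK, hlt⟩ := (sec_open hA x).exists_lt_isCompact hx'
  obtain ⟨U, V, hU, hV, hxU, hKV, hUV⟩ := generalized_tube_lemma (isCompact_singleton (x := x)) hK hA
    (by rintro ⟨a, b⟩ ⟨ha, hb⟩; simp only [Set.mem_singleton_iff] at ha; subst ha; exact hKA hb)
  filter_upwards [hU.mem_nhds (hxU rfl)] with z hz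
  have : ENNReal.ofReal t < volume (Prod.mk z ⁻¹' A) :=
    hlt.trans_le (measure_mono fun y hy => hUV ⟨hz, hKV hy⟩)
  exact (ENNReal.ofReal_lt_iff_lt_toReal ht (sec_ne_top hb z)).1 this

lemma secLen_nonneg (A : Set (ℝ × ℝ)) (x : ℝ) : 0 ≤ secLen A x := ENNReal.toReal_nonneg

lemma secLen_measurable {A : Set (ℝ × ℝ)} (hA : IsOpen A) : Measurable (secLen A) :=
  (measurable_measure_prodMk_left hA.measurableSet).ennreal_toReal

lemma lintegral_secLen {A : Set (ℝ × ℝ)} (hA : IsOpen A) (hb : Bornology.IsBounded A) {c : ℝ}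
    (hc : 0 < c) : ∫⁻ x, ENNReal.ofReal (secLen A x / c) = volume A / ENNReal.ofReal c := by
  rw [Measure.volume_eq_prod, Measure.prod_apply hA.measurableSet]
  simp_rw [ENNReal.ofReal_div_of_pos hc, secLen, ENNReal.ofReal_toReal (sec_ne_top hb _),
    div_eq_mul_inv]
  rw [lintegral_mul_const]
  exact measurable_measure_prodMk_left hA.measurableSet

lemma secLen_sup {A : Set (ℝ × ℝ)} (hA : IsOpen A) (hb : Bornology.IsBounded A)
    (hn : A.Nonempty) : ∃ a : ℝ, 0 < a ∧ (∀ x, secLen A x ≤ a) ∧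
      ∀ t < a, ∃ x, t < secLen A x := by
  have hbd : BddAbove (Set.range (secLen A)) := by
    refine ⟨(volume (Prod.snd '' A)).toReal, ?_⟩
    rintro _ ⟨x, rfl⟩
    exact ENNReal.toReal_mono hb.image_snd.measure_lt_top.ne
      (measure_mono fun y hy => ⟨(x, y), hy, rfl⟩)
  obtain ⟨⟨x, y⟩, hxy⟩ := hn
  have hpos : 0 < secLen A x :=
    ENNReal.toReal_pos ((sec_open hA x).measure_pos volume ⟨y, hxy⟩).ne' (sec_ne_top hb x)
  refine ⟨⨆ x, secLen A x, hpos.trans_le (le_ciSup hbd x), fun x => le_ciSup hbd x, fun t ht => ?_⟩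
  exact exists_lt_of_lt_ciSup ht

lemma bm2 {A B : Set (ℝ × ℝ)} (hA : IsOpen A) (hB : IsOpen B) (hAb : Bornology.IsBounded A)
    (hBb : Bornology.IsBounded B) (hAn : A.Nonempty) (hBn : B.Nonempty) :
    (volume A).toReal + (volume B).toReal + 2 * √((volume A).toReal * (volume B).toReal)
      ≤ (volume (A + B)).toReal := by
  obtain ⟨a, ha, hfa, hsa⟩ := secLen_sup hA hAb hAn
  obtain ⟨b, hb, hfb, hsb⟩ := secLen_sup hB hBb hBn
  have hC : IsOpen (A + B) := hA.add_right
  have hCb : Bornology.IsBounded (A + B) := hAb.add hBb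
  have key : volume A / ENNReal.ofReal a + volume B / ENNReal.ofReal b
      ≤ volume (A + B) / ENNReal.ofReal (a + b) := by
    rw [← lintegral_secLen hA hAb ha, ← lintegral_secLen hB hBb hb,
      ← lintegral_secLen hC hCb (add_pos ha hb)]
    rw [lintegral_eq_lintegral_meas_lt _ (Filter.Eventually.of_forall fun x =>
        div_nonneg (secLen_nonneg _ _) ha.le) ((secLen_measurable hA).div_const _).aemeasurable,
      lintegral_eq_lintegral_meas_lt _ (Filter.Eventually.of_forall fun x =>
        div_nonneg (secLen_nonneg _ _) hb.le) ((secLen_measurable hB).div_const _).aemeasurable,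
      lintegral_eq_lintegral_meas_lt _ (Filter.Eventually.of_forall fun x =>
        div_nonneg (secLen_nonneg _ _) (add_pos ha hb).le)
        ((secLen_measurable hC).div_const _).aemeasurable]
    have hmeas : Measurable fun t : ℝ => volume {x | t < secLen A x / a} :=
      Antitone.measurable (fun s t hst => measure_mono fun x hx => lt_of_le_of_lt hst hx)
    rw [← lintegral_add_left hmeas]
    refine setLIntegral_mono' measurableSet_Ioi fun t ht => ?_
    simp only [lt_div_iff₀ ha, lt_div_iff₀ hb, lt_div_iff₀ (add_pos ha hb)]
    have ht : 0 < t := ht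
    by_cases h1 : t < 1
    · have hta : 0 ≤ t * a := by positivity
      have htb : 0 ≤ t * b := by positivity
      refine (bm1 _ _ (secLen_open hA hAb hta) (secLen_open hB hBb htb)
        (hsa _ (by nlinarith)) (hsb _ (by nlinarith))).trans (measure_mono ?_)
      rintro _ ⟨x, hx, y, hy, rfl⟩
      simp only [Set.mem_ofPred_eq] at hx hy ⊢
      have hxn : (Prod.mk x ⁻¹' A).Nonempty := by
        by_contra h
        rw [Set.not_nonempty_iff_eq_empty] at h
        simp [secLen, h] at hx; linarith
      have hyn : (Prod.mk y ⁻¹' B).Nonempty := by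
        by_contra h
        rw [Set.not_nonempty_iff_eq_empty] at h
        simp [secLen, h] at hy; linarith
      have h3 := (bm1 _ _ (sec_open hA x) (sec_open hB y) hxn hyn).trans
        (measure_mono (μ := volume) (t := Prod.mk (x + y) ⁻¹' (A + B)) (by
          rintro _ ⟨p, hp, q, hq, rfl⟩
          exact ⟨(x, p), hp, (y, q), hq, rfl⟩))
      have h4 := ENNReal.toReal_mono (sec_ne_top hCb _) h3
      rw [ENNReal.toReal_add (sec_ne_top hAb _) (sec_ne_top hBb _)] at h4
      change secLen A x + secLen B y ≤ secLen (A + B) (x + y) at h4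
      linarith
    · have e1 : {x | t * a < secLen A x} = ∅ := by
        ext x; simp only [Set.mem_ofPred_eq, Set.mem_empty_iff_false, iff_false, not_lt]
        exact (hfa x).trans (by nlinarith)
      have e2 : {x | t * b < secLen B x} = ∅ := by
        ext x; simp only [Set.mem_ofPred_eq, Set.mem_empty_iff_false, iff_false, not_lt]
        exact (hfb x).trans (by nlinarith)
      rw [e1, e2]; simp
  have fA := (hAb.measure_lt_top (μ := volume)).ne
  have fB := (hBb.measure_lt_top (μ := volume)).ne
  have fC := (hCb.measure_lt_top (μ := volume)).ne
  have key2 := ENNReal.toReal_mono (ENNReal.div_ne_top fC (by simp; linarith)) key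
  rw [ENNReal.toReal_add (ENNReal.div_ne_top fA (by simpa using ha))
    (ENNReal.div_ne_top fB (by simpa using hb)), ENNReal.toReal_div, ENNReal.toReal_div,
    ENNReal.toReal_div, ENNReal.toReal_ofReal ha.le, ENNReal.toReal_ofReal hb.le,
    ENNReal.toReal_ofReal (add_pos ha hb).le, le_div_iff₀ (add_pos ha hb)] at key2
  set α := (volume A).toReal
  set β := (volume B).toReal
  have hα : 0 ≤ α := ENNReal.toReal_nonneg
  have hβ : 0 ≤ β := ENNReal.toReal_nonneg
  refine le_trans ?_ key2
  have e : (α / a + β / b) * (a + b) = α + β + (α * (b / a) + β * (a / b)) := by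
    field_simp; ring
  rw [e]
  have hs : √(α * β) = √(α * (b / a)) * √(β * (a / b)) := by
    rw [← Real.sqrt_mul (by positivity)]; congr 1; field_simp
  have h1 := Real.sq_sqrt (show 0 ≤ α * (b / a) by positivity)
  have h2 := Real.sq_sqrt (show 0 ≤ β * (a / b) by positivity)
  rw [hs]
  nlinarith [sq_nonneg (√(α * (b / a)) - √(β * (a / b)))]

abbrev E2 := EuclideanSpace ℝ (Fin 2)

lemma bm_ball {A : Set E2} (hA : IsOpen A) (hAb : Bornology.IsBounded A) (hAn : A.Nonempty)
    {ε : ℝ} (hε : 0 < ε) :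
    (volume A).toReal + ε * (2 * √π * √(volume A).toReal)
      ≤ (volume (A + Metric.ball (0 : E2) ε)).toReal := by
  let T : E2 → ℝ × ℝ := fun x => (x 0, x 1)
  have hT : MeasurePreserving T volume volume :=
    (volume_preserving_finTwoArrow ℝ).comp (PiLp.volume_preserving_ofLp (Fin 2))
  let S : ℝ × ℝ → E2 := fun p => !₂[p.1, p.2]
  have hST : ∀ x, S (T x) = x := by
    intro x; ext i; fin_cases i <;> simp [S, T]
  have hTS : ∀ x, T (S x) = x := by
    intro x; simp [S, T]
  have hSc : Continuous S := by
    simp only [S]; fun_prop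
  have hTc : Continuous T := by
    simp only [T]; fun_prop
  have him : ∀ X : Set E2, T '' X = S ⁻¹' X := fun X =>
    congrFun (Set.image_eq_preimage_of_inverse hST hTS) X
  have hop : ∀ X : Set E2, IsOpen X → IsOpen (T '' X) := fun X hX => by
    rw [him]; exact hX.preimage hSc
  have hbd : ∀ X : Set E2, Bornology.IsBounded X → Bornology.IsBounded (T '' X) := fun X hX =>
    ((hX.isCompact_closure.image hTc).isBounded).subset (Set.image_mono subset_closure)
  have hvol : ∀ X : Set E2, IsOpen X → volume (T '' X) = volume X := fun X hX => by
    rw [← hT.measure_preimage (hop X hX).nullMeasurableSet, Set.preimage_image_eq]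
    exact (Function.LeftInverse.injective hST)
  have hadd : T '' (A + Metric.ball (0 : E2) ε) = T '' A + T '' (Metric.ball (0 : E2) ε) := by
    ext p
    constructor
    · rintro ⟨_, ⟨x, hx, y, hy, rfl⟩, rfl⟩
      exact ⟨_, ⟨x, hx, rfl⟩, _, ⟨y, hy, rfl⟩, by simp [T]⟩
    · rintro ⟨_, ⟨x, hx, rfl⟩, _, ⟨y, hy, rfl⟩, rfl⟩
      exact ⟨_, ⟨x, hx, y, hy, rfl⟩, by simp [T]⟩
  have := bm2 (hop A hA) (hop _ (Metric.isOpen_ball (x := (0 : E2)) (ε := ε))) (hbd A hAb)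
    (hbd _ Metric.isBounded_ball) (hAn.image _) ((Metric.nonempty_ball.2 hε).image _)
  rw [← hadd, hvol _ hA, hvol _ Metric.isOpen_ball, hvol _ hA.add_right] at this
  rw [EuclideanSpace.volume_ball_fin_two, ENNReal.toReal_mul, ENNReal.toReal_pow,
    ENNReal.toReal_ofReal hε.le] at this
  rw [ENNReal.toReal_ofReal Real.pi_pos.le] at this
  refine le_trans ?_ this
  rw [Real.sqrt_mul ENNReal.toReal_nonneg, Real.sqrt_mul (by positivity), Real.sqrt_sq hε.le]
  nlinarith [show 0 ≤ ε ^ 2 * π by positivity]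
open scoped Pointwise ENNReal

/-- distribution function -/
noncomputable def dist' (v : E2 → ℝ) (t : ℝ) : ℝ := (volume {x | t < v x}).toReal

lemma superlevel_compact {v : E2 → ℝ} (hc : Continuous v) (hs : HasCompactSupport v) {s : ℝ}
    (h : 0 < s) : IsCompact {x | s ≤ v x} := by
  refine hs.isCompact.of_isClosed_subset (isClosed_le continuous_const hc) fun x hx => ?_
  refine subset_tsupport _ ?_
  have : s ≤ v x := hx
  simp only [Function.mem_support]; linarith

lemma superlevel_bdd {v : E2 → ℝ} (hs : HasCompactSupport v) {s : ℝ}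
    (h : 0 ≤ s) : Bornology.IsBounded {x | s < v x} := by
  refine hs.isCompact.isBounded.subset fun x hx => subset_tsupport _ ?_
  have : s < v x := hx
  simp only [Function.mem_support]; linarith

lemma dist'_anti {v : E2 → ℝ} (hs : HasCompactSupport v) {s t : ℝ}
    (h : 0 ≤ s) (hst : s ≤ t) : dist' v t ≤ dist' v s :=
  ENNReal.toReal_mono (superlevel_bdd hs h).measure_lt_top.ne
    (measure_mono fun _ hx => lt_of_le_of_lt hst hx)

lemma dist'_meas (v : E2 → ℝ) : Measurable (dist' v) :=
  (Antitone.measurable (f := fun t => volume {x | t < v x}) (fun _ _ hst =>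
    measure_mono fun _ hx => lt_of_le_of_lt hst hx)).ennreal_toReal

lemma dist'_nonneg (v : E2 → ℝ) (t : ℝ) : 0 ≤ dist' v t := ENNReal.toReal_nonneg

lemma unif_lemma {v : E2 → ℝ} (hc : Continuous v) (hn : ∀ x, 0 ≤ v x) (hs : HasCompactSupport v)
    (hd : ContDiffOn ℝ 1 v {x | 0 < v x}) {δ : ℝ} (hδ : 0 < δ) {η : ℝ → ℝ} (hη : Continuous η)
    {κ : ℝ} (hκ : 0 < κ) : ∃ ε > 0, ∀ x y, dist x y < ε → δ < v y →
      v y - v x ≤ ε * (‖fderiv ℝ v x‖ + κ) ∧ δ / 2 < v x ∧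
      ∀ s, v x ≤ s → s ≤ v y → η s ≤ η (v x) + κ := by
  have hK : IsCompact {x | δ / 2 ≤ v x} := superlevel_compact hc hs (by linarith)
  have hop : IsOpen {x | 0 < v x} := isOpen_lt continuous_const hc
  have hKs : {x | δ / 2 ≤ v x} ⊆ {x | 0 < v x} := fun x (hx : δ / 2 ≤ v x) =>
    show 0 < v x by linarith
  have hfd : ContinuousOn (fderiv ℝ v) {x | δ / 2 ≤ v x} :=
    (hd.continuousOn_fderiv_of_isOpen hop le_rfl).mono hKs
  have hu := hK.uniformContinuousOn_of_continuous hfd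
  rw [Metric.uniformContinuousOn_iff] at hu
  obtain ⟨e1, he1, h1⟩ := hu κ hκ
  obtain ⟨M, hM⟩ := hs.exists_bound_of_continuous hc
  have hu2 := (isCompact_Icc (a := (0 : ℝ)) (b := M)).uniformContinuousOn_of_continuous
    hη.continuousOn
  rw [Metric.uniformContinuousOn_iff] at hu2
  obtain ⟨e2, he2, h2⟩ := hu2 κ hκ
  have hvu : UniformContinuous v := hs.uniformContinuous_of_continuous hc
  rw [Metric.uniformContinuous_iff] at hvu
  obtain ⟨e3, he3, h3⟩ := hvu (min e2 (δ / 2)) (by positivity)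
  refine ⟨min (e1 / 2) e3, by positivity, fun x y hxy hy => ?_⟩
  set ε := min (e1 / 2) e3
  have hε1 : ε ≤ e1 / 2 := min_le_left _ _
  have hε3 : ε ≤ e3 := min_le_right _ _
  have hball : ∀ z ∈ Metric.ball y ε, δ / 2 < v z := by
    intro z hz
    have := h3 (lt_of_lt_of_le (Metric.mem_ball.1 hz) hε3)
    have := this.trans_le (min_le_right _ _)
    rw [Real.dist_eq, abs_lt] at this
    linarith
  have hx : x ∈ Metric.ball y ε := hxy
  have hx2 := hball x hx
  refine ⟨?_, hx2, ?_⟩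
  · have hmv := (convex_ball y ε).norm_image_sub_le_of_norm_fderiv_le (𝕜 := ℝ) (f := v)
      (C := ‖fderiv ℝ v x‖ + κ) (x := x) (y := y) ?_ ?_ hx
      (Metric.mem_ball_self (dist_nonneg.trans_lt hxy))
    · rw [Real.norm_eq_abs] at hmv
      refine (le_abs_self _).trans (hmv.trans ?_)
      rw [mul_comm]
      have : ‖y - x‖ ≤ ε := by rw [← dist_eq_norm, dist_comm]; exact hxy.le
      gcongr
    · intro z hz
      have : 0 < v z := by linarith [hball z hz]
      exact ((hd z this).contDiffAt (hop.mem_nhds this)).differentiableAt (by simp)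
    · intro z hz
      have hzx : dist z x < e1 := by
        have := dist_triangle_right z x y
        have := Metric.mem_ball.1 hz
        linarith
      have := h1 z (hball z hz).le x hx2.le hzx
      rw [dist_eq_norm] at this
      linarith [norm_le_norm_add_norm_sub' (fderiv ℝ v z) (fderiv ℝ v x)]
  · intro s hs1 hs2
    have hMb : ∀ z, v z ≤ M := fun z => (le_abs_self _).trans (hM z)
    have h4 := h3 (lt_of_lt_of_le hxy hε3)
    have h4 := h4.trans_le (min_le_left _ _)
    rw [Real.dist_eq, abs_lt] at h4
    have := h2 s ⟨(hn x).trans hs1, hs2.trans (hMb y)⟩ (v x) ⟨hn x, hMb x⟩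
      (by rw [Real.dist_eq, abs_lt]; constructor <;> linarith)
    rw [Real.dist_eq, abs_lt] at this
    linarith

lemma func_ineq_eps {v : E2 → ℝ} (hc : Continuous v) (hn : ∀ x, 0 ≤ v x)
    (hs : HasCompactSupport v)
    {δ : ℝ} (hδ : 0 < δ) {η : ℝ → ℝ} (hη : Continuous η)
    (hη0 : ∀ t, 0 ≤ η t) (hηδ : ∀ t ≤ δ, η t = 0)
    {κ : ℝ} (hκ : 0 < κ) {ε : ℝ} (hε : 0 < ε) (H : ∀ x y, dist x y < ε → δ < v y →
      v y - v x ≤ ε * (‖fderiv ℝ v x‖ + κ) ∧ δ / 2 < v x ∧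
      ∀ s, v x ≤ s → s ≤ v y → η s ≤ η (v x) + κ) :
    ENNReal.ofReal (2 * √π) * ∫⁻ t, ENNReal.ofReal (η t * dist' v t) ≤
      ∫⁻ x in {x | δ / 2 < v x},
        ENNReal.ofReal ((η (v x) + κ) * √(dist' v (v x)) * (‖fderiv ℝ v x‖ + κ)) := by
  have hmu := dist'_meas v
  let W : Set (ℝ × E2) := {p | (∃ y, dist p.2 y < ε ∧ p.1 < v y) ∧ v p.2 ≤ p.1}
  have hW : MeasurableSet W := by
    apply MeasurableSet.inter
    · have : IsOpen {p : ℝ × E2 | ∃ y, dist p.2 y < ε ∧ p.1 < v y} := by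
        simp only [Set.ofPred_exists]
        refine isOpen_iUnion fun y => ?_
        have o1 : IsOpen {p : ℝ × E2 | dist p.2 y < ε} := isOpen_lt (by fun_prop) continuous_const
        have o2 : IsOpen {p : ℝ × E2 | p.1 < v y} := isOpen_lt (by fun_prop) continuous_const
        exact o1.inter o2
      exact this.measurableSet
    · have o3 : IsClosed {p : ℝ × E2 | v p.2 ≤ p.1} := isClosed_le (by fun_prop) (by fun_prop)
      exact o3.measurableSet
  let Q : ℝ → E2 → ℝ≥0∞ := fun t x =>
    W.indicator (fun p => ENNReal.ofReal (η p.1 * √(dist' v p.1))) (t, x)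
  have hQ : Measurable (Function.uncurry Q) := by
    have : Measurable (fun p : ℝ × E2 => ENNReal.ofReal (η p.1 * √(dist' v p.1))) := by
      have := hη.measurable
      fun_prop
    exact this.indicator hW
  have step1 : ENNReal.ofReal ε * (ENNReal.ofReal (2 * √π) * ∫⁻ t, ENNReal.ofReal (η t * dist' v t))
      ≤ ∫⁻ t, ∫⁻ x, Q t x := by
    rw [← mul_assoc, ← ENNReal.ofReal_mul hε.le, ← lintegral_const_mul']
    swap
    · exact ENNReal.ofReal_ne_top
    refine lintegral_mono fun t => ?_
    rw [← ENNReal.ofReal_mul (by positivity)]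
    by_cases ht : t ≤ δ
    · simp [hηδ t ht]
    push Not at ht
    by_cases hne : {x | t < v x}.Nonempty
    swap
    · rw [Set.not_nonempty_iff_eq_empty] at hne
      simp [dist', hne]
    have hop : IsOpen {x | t < v x} := isOpen_lt continuous_const hc
    have hbd := superlevel_bdd hs (s := t) (by linarith)
    have hbm := bm_ball hop hbd hne hε
    have hsub : {x | t < v x} ⊆ {x | t < v x} + Metric.ball (0 : E2) ε := fun x hx =>
      ⟨x, hx, 0, Metric.mem_ball_self hε, by simp⟩
    have hCb : Bornology.IsBounded ({x | t < v x} + Metric.ball (0 : E2) ε) :=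
      hbd.add Metric.isBounded_ball
    have hQt : ∀ x, Q t x = (({x | t < v x} + Metric.ball (0 : E2) ε) \ {x | t < v x}).indicator
        (fun _ => ENNReal.ofReal (η t * √(dist' v t))) x := by
      intro x
      simp only [Q, Set.indicator]
      congr 1
      simp only [W, Set.mem_sdiff, Set.mem_ofPred_eq, eq_iff_iff, not_lt]
      refine and_congr_left fun _ => ?_
      constructor
      · rintro ⟨y, hy, hty⟩
        exact ⟨y, hty, x - y, by simpa [← dist_eq_norm] using hy, by simp⟩
      · rintro ⟨y, hty, z, hz, rfl⟩
        exact ⟨y, by simpa using hz, hty⟩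
    simp_rw [hQt]
    rw [lintegral_indicator (hop.add_right.measurableSet.diff hop.measurableSet), setLIntegral_const,
      measure_sdiff hsub hop.measurableSet.nullMeasurableSet hbd.measure_lt_top.ne]
    have h5 : ENNReal.ofReal (ε * (2 * √π * √(dist' v t))) ≤
        volume ({x | t < v x} + Metric.ball (0 : E2) ε) - volume {x | t < v x} := by
      rw [← ENNReal.ofReal_toReal hCb.measure_lt_top.ne,
        ← ENNReal.ofReal_toReal hbd.measure_lt_top.ne, ← ENNReal.ofReal_sub _ ENNReal.toReal_nonneg]
      apply ENNReal.ofReal_le_ofReal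
      rw [dist']; linarith
    refine le_trans (le_of_eq ?_) (mul_le_mul_right h5 _)
    rw [← ENNReal.ofReal_mul (mul_nonneg (hη0 _) (sqrt_nonneg _))]
    congr 1
    have := Real.mul_self_sqrt (dist'_nonneg v t)
    linear_combination (-(2 * ε * √π * η t)) * this
  have step2 : ∫⁻ t, ∫⁻ x, Q t x ≤ ENNReal.ofReal ε * ∫⁻ x in {x | δ / 2 < v x},
        ENNReal.ofReal ((η (v x) + κ) * √(dist' v (v x)) * (‖fderiv ℝ v x‖ + κ)) := by
    rw [lintegral_lintegral_swap hQ.aemeasurable, ← lintegral_const_mul' _ _ ENNReal.ofReal_ne_top,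
      ← lintegral_indicator (isOpen_lt continuous_const hc).measurableSet]
    refine lintegral_mono fun x => ?_
    have hle : ∀ t, Q t x ≤ (Set.Ico (v x) (v x + ε * (‖fderiv ℝ v x‖ + κ))).indicator
        (fun _ => {x | δ / 2 < v x}.indicator (fun x => ENNReal.ofReal
          ((η (v x) + κ) * √(dist' v (v x)))) x) t := by
      intro t
      by_cases hm : (t, x) ∈ W
      swap
      · simp [Q, hm]
      simp only [Q, Set.indicator_of_mem hm]
      by_cases ht : t ≤ δ
      · simp [hηδ t ht]
      push Not at ht
      obtain ⟨⟨y, hxy, hty⟩, hvx⟩ := hm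
      simp only at hxy hty hvx
      obtain ⟨a1, a2, a3⟩ := H x y hxy (ht.trans hty)
      rw [Set.indicator_of_mem (by constructor <;> linarith), Set.indicator_of_mem (by exact a2)]
      apply ENNReal.ofReal_le_ofReal
      have := dist'_anti hs (hn x) hvx
      have := a3 t hvx hty.le
      have := hη0 (v x)
      gcongr
    refine (lintegral_mono hle).trans ?_
    rw [lintegral_indicator measurableSet_Ico, setLIntegral_const, Real.volume_Ico]
    by_cases hx : δ / 2 < v x
    · rw [Set.indicator_of_mem (by exact hx), Set.indicator_of_mem (by exact hx)]
      have := hη0 (v x)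
      rw [← ENNReal.ofReal_mul (by positivity), ← ENNReal.ofReal_mul (by positivity)]
      apply le_of_eq; congr 1; ring
    · rw [Set.indicator_of_notMem (by exact hx), Set.indicator_of_notMem (by exact hx)]; simp
  have := step1.trans step2
  exact (ENNReal.mul_le_mul_iff_right (by simpa using hε) ENNReal.ofReal_ne_top).1 this

lemma func_ineq {v : E2 → ℝ} (hc : Continuous v) (hn : ∀ x, 0 ≤ v x) (hs : HasCompactSupport v)
    (hd : ContDiffOn ℝ 1 v {x | 0 < v x}) {δ : ℝ} (hδ : 0 < δ) {η : ℝ → ℝ} (hη : Continuous η)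
    (hη0 : ∀ t, 0 ≤ η t) (hηδ : ∀ t ≤ δ, η t = 0) :
    ENNReal.ofReal (2 * √π) * ∫⁻ t, ENNReal.ofReal (η t * dist' v t) ≤
      ∫⁻ x, ENNReal.ofReal (η (v x) * √(dist' v (v x)) * ‖fderiv ℝ v x‖) := by
  have hK : IsCompact {x | δ / 2 ≤ v x} := superlevel_compact hc hs (by linarith)
  have hop : IsOpen {x | 0 < v x} := isOpen_lt continuous_const hc
  have hKs : {x | δ / 2 ≤ v x} ⊆ {x | 0 < v x} := fun x (hx : δ / 2 ≤ v x) =>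
    show 0 < v x by linarith
  have hfd : ContinuousOn (fderiv ℝ v) {x | δ / 2 ≤ v x} :=
    (hd.continuousOn_fderiv_of_isOpen hop le_rfl).mono hKs
  obtain ⟨L, hL⟩ := hK.exists_bound_of_continuousOn hfd
  obtain ⟨N, hN⟩ := hK.exists_bound_of_continuousOn (hη.comp hc).continuousOn
  set S := {x | δ / 2 < v x} with hS
  have hSm : MeasurableSet S := (isOpen_lt continuous_const hc).measurableSet
  have hSf : volume S ≠ ∞ := (superlevel_bdd hs (by linarith)).measure_lt_top.ne
  set C := (N + L + 1) * √(dist' v 0)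
  set Y := ∫⁻ x, ENNReal.ofReal (η (v x) * √(dist' v (v x)) * ‖fderiv ℝ v x‖)
  have main : ∀ κ ∈ Set.Ioc (0 : ℝ) 1,
      ENNReal.ofReal (2 * √π) * ∫⁻ t, ENNReal.ofReal (η t * dist' v t) ≤
      Y + ENNReal.ofReal κ * (ENNReal.ofReal C * volume S) := by
    rintro κ ⟨hκ, hκ1⟩
    obtain ⟨ε, hε, H⟩ := unif_lemma hc hn hs hd hδ hη hκ
    refine (func_ineq_eps hc hn hs hδ hη hη0 hηδ hκ hε H).trans ?_
    calc _ ≤ ∫⁻ x in S, (ENNReal.ofReal (η (v x) * √(dist' v (v x)) * ‖fderiv ℝ v x‖)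
            + ENNReal.ofReal (κ * C)) := by
          refine setLIntegral_mono' hSm fun x hx => ?_
          have hx' : δ / 2 < v x := hx
          have h1 := hL x hx'.le
          have h2 := hN x hx'.le
          have h3 := hη0 (v x)
          simp only [Function.comp, Real.norm_eq_abs] at h2
          have h2 := (le_abs_self _).trans h2
          have h4 : √(dist' v (v x)) ≤ √(dist' v 0) :=
            Real.sqrt_le_sqrt (dist'_anti hs le_rfl (hn x))
          have h5 := norm_nonneg (fderiv ℝ v x)
          have hC0 : 0 ≤ κ * C := mul_nonneg hκ.le (mul_nonneg (by linarith) (sqrt_nonneg _))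
          rw [← ENNReal.ofReal_add (by positivity) hC0]
          apply ENNReal.ofReal_le_ofReal
          have h6 : κ * ((η (v x) + ‖fderiv ℝ v x‖ + κ) * √(dist' v (v x))) ≤ κ * C := by
            apply mul_le_mul_of_nonneg_left _ hκ.le
            apply mul_le_mul _ h4 (sqrt_nonneg _) <;> linarith
          linarith
      _ ≤ Y + ENNReal.ofReal κ * (ENNReal.ofReal C * volume S) := by
          rw [lintegral_add_right _ measurable_const, setLIntegral_const, ENNReal.ofReal_mul hκ.le,
            mul_assoc]
          gcongr
          exact setLIntegral_le_lintegral _ _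
  have hlim : Filter.Tendsto (fun κ : ℝ => Y + ENNReal.ofReal κ * (ENNReal.ofReal C * volume S))
      (nhdsWithin 0 (Set.Ioi 0)) (nhds (Y + ENNReal.ofReal 0 * (ENNReal.ofReal C * volume S))) := by
    refine Filter.Tendsto.const_add _ (ENNReal.Tendsto.mul_const ?_
      (Or.inr (ENNReal.mul_ne_top ENNReal.ofReal_ne_top hSf)))
    exact (ENNReal.continuous_ofReal.tendsto 0).mono_left nhdsWithin_le_nhds
  simp only [ENNReal.ofReal_zero, zero_mul, add_zero] at hlim
  refine ge_of_tendsto hlim ?_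
  filter_upwards [Ioc_mem_nhdsGT (zero_lt_one (α := ℝ))] with κ hκ using main κ hκ



open scoped Pointwise ENNReal

lemma norm_sq_dual (f : E2 →L[ℝ] ℝ) :
    ‖f‖ ^ 2 = ∑ i : Fin 2, f (EuclideanSpace.single i 1) * f (EuclideanSpace.single i 1) := by
  obtain ⟨w, rfl⟩ := (InnerProductSpace.toDual ℝ E2).surjective f
  rw [LinearIsometryEquiv.norm_map, EuclideanSpace.norm_sq_eq]
  simp [EuclideanSpace.inner_single_right, sq]

lemma integral_fderiv_zero {X : E2 → ℝ} (hX : ContDiff ℝ 1 X) (hs : HasCompactSupport X) (e : E2) :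
    Integrable (fun x => fderiv ℝ X x e) ∧ ∫ x, fderiv ℝ X x e = 0 := by
  have hc : Continuous (fun x => fderiv ℝ X x e) :=
    (hX.continuous_fderiv (by simp)).clm_apply continuous_const
  have hi : Integrable (fun x => fderiv ℝ X x e) :=
    hc.integrable_of_hasCompactSupport (hs.fderiv_apply (𝕜 := ℝ) e)
  refine ⟨hi, ?_⟩
  have := integral_mul_fderiv_eq_neg_fderiv_mul_of_integrable (μ := (volume : Measure E2))
    (f := fun _ : E2 => (1 : ℝ)) (g := X) (v := e) (by simp) (by simpa using hi)
    (by simpa using hX.continuous.integrable_of_hasCompactSupport hs)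
    (by simp) (fun x _ => (hX.differentiable (by simp)).differentiableAt)
  simpa using this

lemma ibp {v : E2 → ℝ} (hc : Continuous v) (hn : ∀ x, 0 ≤ v x) (hs : HasCompactSupport v)
    (hd : ContDiffOn ℝ 2 v {x | 0 < v x}) {δ : ℝ} (hδ : 0 < δ) {g : ℝ → ℝ} (hg : Continuous g)
    (hgδ : ∀ t ≤ δ, g t = 0) {γ : ℝ}
    (hl : ∀ x, 0 < v x → lap v x = -(v x ^ γ)) :
    Integrable (fun x => g (v x) * ‖fderiv ℝ v x‖ ^ 2 - (∫ t in (0 : ℝ)..v x, g t) * v x ^ γ) ∧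
    ∫ x, (g (v x) * ‖fderiv ℝ v x‖ ^ 2 - (∫ t in (0 : ℝ)..v x, g t) * v x ^ γ) = 0 := by
  set G : ℝ → ℝ := fun s => ∫ t in (0 : ℝ)..s, g t
  have hGd : ∀ s, HasDerivAt G (g s) s := fun s =>
    intervalIntegral.integral_hasDerivAt_right (hg.intervalIntegrable _ _)
      hg.stronglyMeasurable.stronglyMeasurableAtFilter hg.continuousAt
  have hG1 : ContDiff ℝ 1 G := by
    rw [contDiff_one_iff_deriv]
    refine ⟨fun s => (hGd s).differentiableAt, ?_⟩
    rw [show deriv G = g from funext fun s => (hGd s).deriv]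
    exact hg
  have hG0 : ∀ s, 0 ≤ s → s ≤ δ → G s = 0 := by
    intro s h0 h1
    refine intervalIntegral.integral_zero_ae (Filter.Eventually.of_forall fun t ht => ?_)
    rw [Set.uIoc_of_le h0] at ht
    exact hgδ t (ht.2.trans h1)
  have hop : IsOpen {x | 0 < v x} := isOpen_lt continuous_const hc
  have hop2 : IsOpen {x | v x < δ} := isOpen_lt hc continuous_const
  let e : Fin 2 → E2 := fun i => EuclideanSpace.single i 1
  let X : Fin 2 → E2 → ℝ := fun i x => G (v x) * fderiv ℝ v x (e i)
  have hXz : ∀ i x, v x < δ → X i =ᶠ[nhds x] fun _ => 0 := by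
    intro i x hx
    filter_upwards [hop2.mem_nhds hx] with z hz
    simp [X, hG0 (v z) (hn z) (le_of_lt hz)]
  have hdv : ∀ x, 0 < v x → ContDiffAt ℝ 1 (fderiv ℝ v) x := fun x hx =>
    ((hd x hx).contDiffAt (hop.mem_nhds hx)).fderiv_right (by norm_num)
  have hdv0 : ∀ x, 0 < v x → ContDiffAt ℝ 1 v x := fun x hx =>
    ((hd x hx).contDiffAt (hop.mem_nhds hx)).of_le (by norm_num)
  have hX : ∀ i, ContDiff ℝ 1 (X i) := by
    intro i
    rw [contDiff_iff_contDiffAt]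
    intro x
    by_cases hx : v x < δ
    · exact (contDiffAt_const (c := (0 : ℝ))).congr_of_eventuallyEq (hXz i x hx)
    · have hx0 : 0 < v x := by linarith
      exact (hG1.contDiffAt.comp x (hdv0 x hx0)).mul ((hdv x hx0).clm_apply contDiffAt_const)
  have hXs : ∀ i, HasCompactSupport (X i) := by
    intro i
    refine hs.mono fun x hx => ?_
    simp only [Function.mem_support, X] at hx ⊢
    intro h
    apply hx
    rw [h, hG0 0 le_rfl hδ.le, zero_mul]
  have hdiv : ∀ x, ∑ i, fderiv ℝ (X i) x (e i) =
      g (v x) * ‖fderiv ℝ v x‖ ^ 2 - G (v x) * v x ^ γ := by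
    intro x
    by_cases hx : v x < δ
    · have : ∀ i, fderiv ℝ (X i) x = 0 := fun i => by
        rw [(hXz i x hx).fderiv_eq]; simp
      simp [this, hgδ _ hx.le, hG0 _ (hn x) hx.le]
    · have hx0 : 0 < v x := by linarith
      have hXi : ∀ i, fderiv ℝ (X i) x (e i) = g (v x) * (fderiv ℝ v x (e i) * fderiv ℝ v x (e i))
          + G (v x) * fderiv ℝ (fderiv ℝ v) x (e i) (e i) := by
        intro i
        have h1 : HasFDerivAt (fun x => G (v x)) (g (v x) • fderiv ℝ v x) x :=
          (hGd (v x)).comp_hasFDerivAt x ((hdv0 x hx0).differentiableAt (by simp)).hasFDerivAt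
        have h2 : HasFDerivAt (fun x => fderiv ℝ v x (e i))
            ((fderiv ℝ (fderiv ℝ v) x).flip (e i)) x := by
          have := ((hdv x hx0).differentiableAt (by simp)).hasFDerivAt.clm_apply
            (hasFDerivAt_const (e i) x)
          simpa using this
        have h3 := (h1.mul h2).fderiv
        change fderiv ℝ ((fun x => G (v x)) * fun x => fderiv ℝ v x (e i)) x (e i) = _
        rw [h3]
        simp
        ring
      simp_rw [hXi]
      rw [Finset.sum_add_distrib, ← Finset.mul_sum, ← Finset.mul_sum, ← norm_sq_dual]
      have := hl x hx0
      rw [lap] at this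
      rw [this]; ring
  have hI := fun i => integral_fderiv_zero (hX i) (hXs i) (e i)
  have hfun : (fun x => g (v x) * ‖fderiv ℝ v x‖ ^ 2 - G (v x) * v x ^ γ) =
    fun x => ∑ i, fderiv ℝ (X i) x (e i) := funext fun x => (hdiv x).symm
  change Integrable (fun x => g (v x) * ‖fderiv ℝ v x‖ ^ 2 - G (v x) * v x ^ γ) ∧
    ∫ x, (g (v x) * ‖fderiv ℝ v x‖ ^ 2 - G (v x) * v x ^ γ) = 0
  rw [hfun]
  refine ⟨integrable_finsetSum _ fun i _ => (hI i).1, ?_⟩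
  rw [integral_finsetSum _ fun i _ => (hI i).1]
  simp [hI]
open scoped Pointwise ENNReal NNReal BoundedContinuousFunction

/-- the weighted measure `u^γ dA` -/
noncomputable def wm (γ : ℝ) (v : E2 → ℝ) : Measure E2 :=
  (volume.restrict {x | 0 < v x}).withDensity (fun x => ENNReal.ofReal (v x ^ γ))

lemma wm_finite {γ : ℝ} (hγ : 0 ≤ γ) {v : E2 → ℝ} (hc : Continuous v)
    (hs : HasCompactSupport v) : IsFiniteMeasure (wm γ v) := by
  apply isFiniteMeasure_withDensity
  have h1 : ContinuousOn (fun x => v x ^ γ) (tsupport v) :=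
    (hc.rpow_const (fun _ => Or.inr hγ)).continuousOn
  obtain ⟨M, hM⟩ := hs.isCompact.exists_bound_of_continuousOn h1
  have hb := superlevel_bdd hs (le_refl (0 : ℝ))
  have hle : ∫⁻ x in {x | 0 < v x}, ENNReal.ofReal (v x ^ γ) ≤
      ∫⁻ x in {x | 0 < v x}, ENNReal.ofReal M := by
    refine setLIntegral_mono' (isOpen_lt continuous_const hc).measurableSet fun x hx => ?_
    have hx : 0 < v x := hx
    exact ENNReal.ofReal_le_ofReal
      ((le_abs_self _).trans (hM x (subset_tsupport _ (by simpa using hx.ne'))))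
  rw [setLIntegral_const] at hle
  exact ne_top_of_le_ne_top (ENNReal.mul_ne_top ENNReal.ofReal_ne_top hb.measure_lt_top.ne) hle

lemma lintegral_wm {γ : ℝ} (hγ : 0 ≤ γ) {v : E2 → ℝ} (hc : Continuous v)
    {f : E2 → ℝ≥0∞} (hf : Measurable f) :
    ∫⁻ x, f x ∂(wm γ v) = ∫⁻ x in {x | 0 < v x}, ENNReal.ofReal (v x ^ γ) * f x := by
  rw [wm, lintegral_withDensity_eq_lintegral_mul _
    (hc.rpow_const (fun _ => Or.inr hγ)).measurable.ennreal_ofReal hf]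
  rfl

lemma ibp_lint {γ : ℝ} (hγ : 0 ≤ γ) {v : E2 → ℝ} (hc : Continuous v) (hn : ∀ x, 0 ≤ v x)
    (hs : HasCompactSupport v)
    (hd : ContDiffOn ℝ 2 v {x | 0 < v x}) {δ : ℝ} (hδ : 0 < δ) {g : ℝ → ℝ} (hg : Continuous g)
    (hg0 : ∀ t, 0 ≤ g t) (hgδ : ∀ t ≤ δ, g t = 0)
    (hl : ∀ x, 0 < v x → lap v x = -(v x ^ γ)) :
    ∫⁻ x, ENNReal.ofReal (g (v x) * ‖fderiv ℝ v x‖ ^ 2) ≠ ∞ ∧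
    ∫⁻ x, ENNReal.ofReal (g (v x) * ‖fderiv ℝ v x‖ ^ 2) =
      ∫⁻ t in Set.Ioi 0, wm γ v {x | t < v x} * ENNReal.ofReal (g t) := by
  obtain ⟨h1, h2⟩ := ibp hc hn hs hd hδ hg hgδ hl
  have hGc : Continuous (fun s => ∫ t in (0 : ℝ)..s, g t) :=
    intervalIntegral.continuous_primitive (fun _ _ => hg.intervalIntegrable _ _) 0
  have hcont : Continuous (fun x => (∫ t in (0 : ℝ)..v x, g t) * v x ^ γ) :=
    (hGc.comp hc).mul (hc.rpow_const (fun _ => Or.inr hγ))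
  have hG0 : ∀ x, 0 ≤ ∫ t in (0 : ℝ)..v x, g t := fun x =>
    intervalIntegral.integral_nonneg (hn x) (fun t _ => hg0 t)
  have h3 : Integrable (fun x => (∫ t in (0 : ℝ)..v x, g t) * v x ^ γ) := by
    refine hcont.integrable_of_hasCompactSupport (hs.mono fun x hx => ?_)
    simp only [Function.mem_support] at hx ⊢
    intro h; apply hx; rw [h]; simp
  have h4 : Integrable (fun x => g (v x) * ‖fderiv ℝ v x‖ ^ 2) := by
    have := h1.add h3
    refine this.congr (Filter.Eventually.of_forall fun x => ?_)
    simp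
  rw [integral_sub h4 h3, sub_eq_zero] at h2
  have e1 := ofReal_integral_eq_lintegral_ofReal h4
    (Filter.Eventually.of_forall fun x => mul_nonneg (hg0 _) (sq_nonneg _))
  have e2 := ofReal_integral_eq_lintegral_ofReal h3
    (Filter.Eventually.of_forall fun x => mul_nonneg (hG0 x) (Real.rpow_nonneg (hn x) _))
  refine ⟨by rw [← e1]; exact ENNReal.ofReal_ne_top, ?_⟩
  rw [← e1, h2, e2]
  rw [← lintegral_comp_eq_lintegral_meas_lt_mul (wm γ v) (Filter.Eventually.of_forall hn)
    hc.measurable.aemeasurable (fun t _ => hg.intervalIntegrable _ _)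
    (Filter.Eventually.of_forall hg0)]
  rw [lintegral_wm hγ hc (by have := (hGc.comp hc).measurable; exact this.ennreal_ofReal),
    ← lintegral_indicator (isOpen_lt continuous_const hc).measurableSet]
  refine lintegral_congr fun x => ?_
  by_cases hx : 0 < v x
  · rw [Set.indicator_of_mem (by exact hx), ← ENNReal.ofReal_mul (by positivity), mul_comm]
  · rw [Set.indicator_of_notMem (by exact hx)]
    have : v x = 0 := le_antisymm (not_lt.1 hx) (hn x)
    simp [this]

lemma wm_half {γ : ℝ} (hγ : 0 ≤ γ) {v : E2 → ℝ} (hc : Continuous v)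
    (hs : HasCompactSupport v) :
    2 * ∫⁻ x, wm γ v {y | v x < v y} ∂(wm γ v) ≤ (wm γ v Set.univ) ^ 2 := by
  have := wm_finite hγ hc hs
  set w := wm γ v
  let S : Set (E2 × E2) := {p | v p.1 < v p.2}
  let S' : Set (E2 × E2) := {p | v p.2 < v p.1}
  have hS : MeasurableSet S := (isOpen_lt (hc.comp continuous_fst) (hc.comp continuous_snd)).measurableSet
  have hS' : MeasurableSet S' := (isOpen_lt (hc.comp continuous_snd) (hc.comp continuous_fst)).measurableSet
  have e1 : ∫⁻ x, w {y | v x < v y} ∂w = (w.prod w) S := (Measure.prod_apply hS).symm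
  have e2 : (w.prod w) S' = (w.prod w) S :=
    (Measure.measurePreserving_swap (μ := w) (ν := w)).measure_preimage hS.nullMeasurableSet
  have hdis : Disjoint S S' := by
    rw [Set.disjoint_left]; intro p hp hp'
    exact lt_asymm (show v p.1 < v p.2 from hp) hp'
  rw [e1, two_mul]
  nth_rewrite 2 [← e2]
  rw [← measure_union hdis hS']
  refine (measure_mono (Set.subset_univ _)).trans ?_
  rw [← Set.univ_prod_univ, Measure.prod_prod, sq]

lemma main_eta {γ : ℝ} (hγ : 0 ≤ γ) {v : E2 → ℝ} (hc : Continuous v) (hn : ∀ x, 0 ≤ v x)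
    (hs : HasCompactSupport v)
    (hd : ContDiffOn ℝ 2 v {x | 0 < v x}) {δ : ℝ} (hδ : 0 < δ) {η : ℝ → ℝ} (hη : Continuous η)
    (hη0 : ∀ t, 0 ≤ η t) (hηδ : ∀ t ≤ δ, η t = 0) (hηγ : ∀ t, 0 < t → η t ≤ t ^ γ)
    (hl : ∀ x, 0 < v x → lap v x = -(v x ^ γ)) :
    ENNReal.ofReal (8 * π) * ∫⁻ t, ENNReal.ofReal (η t * dist' v t) ≤ (wm γ v Set.univ) ^ 2 := by
  have hfin := wm_finite hγ hc hs
  set w := wm γ v with hw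
  set F : ℝ → ℝ≥0∞ := fun t => w {x | t < v x} with hF
  have hFm : Measurable F := Antitone.measurable (fun s t hst =>
    measure_mono fun _ hx => lt_of_le_of_lt hst hx)
  have hFtop : ∀ t, F t ≠ ∞ := fun t => measure_ne_top _ _
  set X := ∫⁻ t, ENNReal.ofReal (η t * dist' v t) with hX
  have hmu := dist'_meas v
  have hDm : Measurable (fun x => ‖fderiv ℝ v x‖) := (measurable_fderiv ℝ v).norm
  have hηm := hη.measurable
  have hcm := hc.measurable
  have hXfin : X ≠ ∞ := by
    obtain ⟨M, hM⟩ := hs.exists_bound_of_continuous hc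
    obtain ⟨N, hN⟩ := (isCompact_Icc (a := (0 : ℝ)) (b := M)).exists_bound_of_continuousOn
      hη.continuousOn
    have : X ≤ ∫⁻ t in Set.Icc 0 M, ENNReal.ofReal (N * dist' v 0) := by
      rw [← lintegral_indicator measurableSet_Icc]
      refine lintegral_mono fun t => ?_
      by_cases ht : t ∈ Set.Icc 0 M
      · rw [Set.indicator_of_mem ht]
        apply ENNReal.ofReal_le_ofReal
        have h1 := (le_abs_self _).trans (hN t ht)
        have h2 := dist'_anti hs le_rfl ht.1
        exact mul_le_mul h1 h2 (dist'_nonneg _ _) ((hη0 t).trans h1)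
      · rw [Set.indicator_of_notMem ht]
        rw [Set.mem_Icc, not_and_or, not_le, not_le] at ht
        rcases ht with ht | ht
        · simp [hηδ t (by linarith)]
        · have : {x | t < v x} = ∅ := by
            ext x; simp only [Set.mem_ofPred_eq, Set.mem_empty_iff_false, iff_false, not_lt]
            exact ((le_abs_self _).trans (hM x)).trans ht.le
          simp [dist', this]
    refine ne_top_of_le_ne_top ?_ this
    rw [setLIntegral_const]
    exact ENNReal.mul_ne_top ENNReal.ofReal_ne_top (by simp)
  -- equality of the two measures on the line
  have hdens : Measurable (fun x => ENNReal.ofReal (η (v x) * ‖fderiv ℝ v x‖ ^ 2)) := by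
    have : Measurable fun x => η (v x) := hηm.comp hcm
    fun_prop
  have hdens2 : Measurable (fun t => F t * ENNReal.ofReal (η t)) := by fun_prop
  have hmeq : Measure.map v (volume.withDensity
      (fun x => ENNReal.ofReal (η (v x) * ‖fderiv ℝ v x‖ ^ 2))) =
      (volume.restrict (Set.Ioi 0)).withDensity (fun t => F t * ENNReal.ofReal (η t)) := by
    have hf1 : IsFiniteMeasure (volume.withDensity
        (fun x => ENNReal.ofReal (η (v x) * ‖fderiv ℝ v x‖ ^ 2))) :=
      isFiniteMeasure_withDensity (ibp_lint hγ hc hn hs hd hδ hη hη0 hηδ hl).1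
    refine ext_of_forall_lintegral_eq_of_IsFiniteMeasure fun f => ?_
    have hfm : Measurable (fun t => (f t : ℝ≥0∞)) := by
      have := f.continuous.measurable
      fun_prop
    rw [lintegral_map hfm hcm, lintegral_withDensity_eq_lintegral_mul _ hdens (g := fun x => (f (v x) : ℝ≥0∞)) (hfm.comp hcm),
      lintegral_withDensity_eq_lintegral_mul _ hdens2 hfm]
    have key := (ibp_lint hγ hc hn hs hd hδ (g := fun t => η t * (f t : ℝ))
      (hη.mul (NNReal.continuous_coe.comp f.continuous)) (fun t => mul_nonneg (hη0 t) (f t).2)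
      (fun t ht => by simp [hηδ t ht]) hl).2
    refine Eq.trans (lintegral_congr fun x => ?_) (key.trans (lintegral_congr fun t => ?_))
    · simp only [Pi.mul_apply]
      rw [mul_right_comm (η (v x)), ENNReal.ofReal_mul (mul_nonneg (hη0 _) (sq_nonneg _)),
        ENNReal.ofReal_coe_nnreal]
    · simp only [Pi.mul_apply]
      rw [ENNReal.ofReal_mul (hη0 _), ENNReal.ofReal_coe_nnreal, mul_assoc]
  set q : ℝ → ℝ≥0∞ := fun t => ENNReal.ofReal (dist' v t) / F t with hq
  have hqm : Measurable q := by fun_prop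
  have hI1 : ∫⁻ x, ENNReal.ofReal (η (v x) * ‖fderiv ℝ v x‖ ^ 2) * q (v x) ≤ X := by
    have e1 : ∫⁻ x, ENNReal.ofReal (η (v x) * ‖fderiv ℝ v x‖ ^ 2) * q (v x) =
        ∫⁻ t, q t ∂(Measure.map v (volume.withDensity
      (fun x => ENNReal.ofReal (η (v x) * ‖fderiv ℝ v x‖ ^ 2)))) := by
      rw [lintegral_map hqm hcm, lintegral_withDensity_eq_lintegral_mul _ hdens (g := fun x => q (v x)) (hqm.comp hcm)]
      rfl
    rw [e1, hmeq, lintegral_withDensity_eq_lintegral_mul _ hdens2 hqm]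
    refine (setLIntegral_le_lintegral _ _).trans (lintegral_mono fun t => ?_)
    simp only [Pi.mul_apply, hq]
    rw [ENNReal.ofReal_mul (hη0 t), mul_comm (F t), mul_assoc]
    gcongr
    exact ENNReal.mul_div_le
  have hpt : ∀ x, ENNReal.ofReal (4 * √π) *
      ENNReal.ofReal (η (v x) * √(dist' v (v x)) * ‖fderiv ℝ v x‖) ≤
      ENNReal.ofReal (4 * π) * (ENNReal.ofReal (η (v x) * ‖fderiv ℝ v x‖ ^ 2) * q (v x)) +
      {x | 0 < v x}.indicator (fun x => ENNReal.ofReal (v x ^ γ) * F (v x)) x := by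
    intro x
    by_cases hx : v x ≤ δ
    · simp [hηδ _ hx]
    have hx0 : 0 < v x := by linarith
    rw [Set.indicator_of_mem (by exact hx0)]
    set t := v x with ht
    by_cases hF0 : F t = 0
    · have hz : dist' v t = 0 := by
        have hop : MeasurableSet {x | t < v x} := (isOpen_lt continuous_const hc).measurableSet
        have hle : ENNReal.ofReal (t ^ γ) * volume {x | t < v x} ≤ F t := by
          have hinter : {x | t < v x} ∩ {x | 0 < v x} = {x | t < v x} :=
            Set.inter_eq_left.2 (fun y hy => lt_trans hx0 (show t < v y from hy))
          change _ ≤ wm γ v {x | t < v x}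
          rw [wm, withDensity_apply _ hop, Measure.restrict_restrict hop,
            hinter,
            ← setLIntegral_const]
          refine setLIntegral_mono' hop fun y hy => ?_
          have : t ≤ v y := le_of_lt hy
          exact ENNReal.ofReal_le_ofReal (Real.rpow_le_rpow hx0.le this hγ)
        rw [hF0, nonpos_iff_eq_zero, mul_eq_zero] at hle
        rcases hle with h | h
        · simp only [ENNReal.ofReal_eq_zero] at h
          have := Real.rpow_pos_of_pos hx0 γ
          linarith
        · simp [dist', h]
      simp [hz]
    · have hfpos : 0 < (F t).toReal := ENNReal.toReal_pos hF0 (hFtop t)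
      have hFe : F t = ENNReal.ofReal (F t).toReal := (ENNReal.ofReal_toReal (hFtop t)).symm
      rw [hq]
      simp only
      rw [hFe]
      set f := (F t).toReal
      have hμ := dist'_nonneg v t
      have hD := norm_nonneg (fderiv ℝ v x)
      have h0 := hη0 t
      rw [← ENNReal.ofReal_div_of_pos hfpos, ← ENNReal.ofReal_mul (by positivity),
        ← ENNReal.ofReal_mul (by positivity), ← ENNReal.ofReal_mul (by positivity),
        ← ENNReal.ofReal_mul (by positivity), ← ENNReal.ofReal_add (by positivity) (by positivity)]
      apply ENNReal.ofReal_le_ofReal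
      set D := ‖fderiv ℝ v x‖
      set m := dist' v t
      have hηt : η t * f ≤ t ^ γ * f := mul_le_mul_of_nonneg_right (hηγ t hx0) hfpos.le
      have amgm : 4 * √π * √m * D ≤ 4 * π * (D ^ 2 * (m / f)) + f := by
        have h1 := Real.sq_sqrt hμ
        have h2 := Real.sq_sqrt Real.pi_pos.le
        have : 4 * π * (D ^ 2 * (m / f)) + f - 4 * √π * √m * D = (2 * √π * √m * D - f) ^ 2 / f := by
          field_simp
          linear_combination (-(4 * D ^ 2 * √m ^ 2)) * h2 - 4 * D ^ 2 * π * h1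
        have h3 : 0 ≤ (2 * √π * √m * D - f) ^ 2 / f := by positivity
        linarith
      have := mul_le_mul_of_nonneg_left amgm h0
      linarith
  have hfi := func_ineq hc hn hs (hd.of_le (by norm_num)) hδ hη hη0 hηδ
  have hFv : Measurable (fun x => F (v x)) := hFm.comp hcm
  have big : ENNReal.ofReal (4 * √π) * (ENNReal.ofReal (2 * √π) * X) ≤
      ENNReal.ofReal (4 * π) * X + ∫⁻ x, F (v x) ∂w := by
    calc _ ≤ ENNReal.ofReal (4 * √π) *
          ∫⁻ x, ENNReal.ofReal (η (v x) * √(dist' v (v x)) * ‖fderiv ℝ v x‖) := by gcongr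
      _ = ∫⁻ x, ENNReal.ofReal (4 * √π) *
            ENNReal.ofReal (η (v x) * √(dist' v (v x)) * ‖fderiv ℝ v x‖) :=
          (lintegral_const_mul' _ _ ENNReal.ofReal_ne_top).symm
      _ ≤ _ := lintegral_mono hpt
      _ = ENNReal.ofReal (4 * π) *
            (∫⁻ x, ENNReal.ofReal (η (v x) * ‖fderiv ℝ v x‖ ^ 2) * q (v x))
              + ∫⁻ x, F (v x) ∂w := by
          rw [lintegral_add_left, lintegral_const_mul' _ _ ENNReal.ofReal_ne_top,
            lintegral_indicator (isOpen_lt continuous_const hc).measurableSet,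
            ← lintegral_wm hγ hc hFv]
          exact (hdens.mul (hqm.comp hcm)).const_mul _
      _ ≤ ENNReal.ofReal (4 * π) * X + ∫⁻ x, F (v x) ∂w := by gcongr
  have e8 : ENNReal.ofReal (4 * √π) * (ENNReal.ofReal (2 * √π) * X) =
      ENNReal.ofReal (4 * π) * X + ENNReal.ofReal (4 * π) * X := by
    rw [← mul_assoc, ← add_mul, ← ENNReal.ofReal_mul (by positivity),
      ← ENNReal.ofReal_add (by positivity) (by positivity)]
    congr 2
    have h2 := Real.mul_self_sqrt Real.pi_pos.le
    linear_combination 8 * h2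
  rw [e8] at big
  have big2 := (ENNReal.add_le_add_iff_left (ENNReal.mul_ne_top ENNReal.ofReal_ne_top hXfin)).1 big
  have hh := wm_half hγ hc hs
  calc ENNReal.ofReal (8 * π) * X = 2 * (ENNReal.ofReal (4 * π) * X) := by
        rw [← mul_assoc, ← ENNReal.ofReal_ofNat, ← ENNReal.ofReal_mul (by norm_num)]
        congr 2; ring
    _ ≤ 2 * ∫⁻ x, F (v x) ∂w := by gcongr
    _ ≤ _ := hh

lemma main_lint {γ : ℝ} (hγ : 0 ≤ γ) {v : E2 → ℝ} (hc : Continuous v) (hn : ∀ x, 0 ≤ v x)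
    (hs : HasCompactSupport v)
    (hd : ContDiffOn ℝ 2 v {x | 0 < v x})
    (hl : ∀ x, 0 < v x → lap v x = -(v x ^ γ)) :
    ENNReal.ofReal (8 * π) * ∫⁻ x, ENNReal.ofReal (v x ^ (1 + γ)) ≤
      ENNReal.ofReal (1 + γ) * (wm γ v Set.univ) ^ 2 := by
  rw [lintegral_rpow_eq_lintegral_meas_lt_mul volume (Filter.Eventually.of_forall hn)
    hc.measurable.aemeasurable (by linarith : 0 < 1 + γ), mul_left_comm]
  gcongr
  rw [add_sub_cancel_left]
  let η : ℕ → ℝ → ℝ := fun n t => t ^ γ * min 1 (max 0 ((n + 1) * t - 1))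
  have hη : ∀ n, Continuous (η n) := fun n =>
    (continuous_id.rpow_const (fun _ => Or.inr hγ)).mul (by fun_prop)
  have hηδ : ∀ n : ℕ, ∀ t ≤ 1 / ((n : ℝ) + 1), η n t = 0 := by
    intro n t ht
    rw [le_div_iff₀ (by positivity)] at ht
    simp only [η]
    rw [max_eq_left (by linarith), min_eq_right zero_le_one, mul_zero]
  have hη0 : ∀ n t, 0 ≤ η n t := by
    intro n t
    by_cases ht : t ≤ 0
    · rw [hηδ n t (ht.trans (by positivity))]
    · push Not at ht
      simp only [η]; positivity
  have hηγ : ∀ n t, 0 < t → η n t ≤ t ^ γ := by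
    intro n t ht
    have h1 : 0 ≤ t ^ γ := by positivity
    exact mul_le_of_le_one_right h1 (min_le_left _ _)
  have hb : ∀ n, ENNReal.ofReal (8 * π) *
      ∫⁻ t in Set.Ioi 0, volume {x | t < v x} * ENNReal.ofReal (η n t) ≤
      (wm γ v Set.univ) ^ 2 := by
    intro n
    refine le_trans ?_ (main_eta hγ hc hn hs hd (show 0 < 1 / ((n : ℝ) + 1) by positivity) (hη n)
      (hη0 n) (hηδ n) (hηγ n) hl)
    refine mul_le_mul_right ?_ _
    refine le_trans (setLIntegral_mono' measurableSet_Ioi fun t ht => ?_)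
      (setLIntegral_le_lintegral (Set.Ioi (0 : ℝ)) _)
    have ht : 0 < t := ht
    rw [ENNReal.ofReal_mul (hη0 n t), mul_comm, dist',
      ENNReal.ofReal_toReal (superlevel_bdd hs ht.le).measure_lt_top.ne]
  have hvm : Measurable (fun t : ℝ => volume {x | t < v x}) := Antitone.measurable (fun s t hst =>
    measure_mono fun _ hx => lt_of_le_of_lt hst hx)
  have hlim : Filter.Tendsto (fun n =>
      ∫⁻ t in Set.Ioi 0, volume {x | t < v x} * ENNReal.ofReal (η n t)) Filter.atTop
      (nhds (∫⁻ t in Set.Ioi 0, volume {x | t < v x} * ENNReal.ofReal (t ^ γ))) := by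
    refine lintegral_tendsto_of_tendsto_of_monotone
      (fun n => (hvm.mul (hη n).measurable.ennreal_ofReal).aemeasurable) ?_ ?_
    · filter_upwards [ae_restrict_mem measurableSet_Ioi] with t ht m n hmn
      have ht : 0 < t := ht
      simp only [η]
      have : (m : ℝ) ≤ n := by exact_mod_cast hmn
      gcongr
    · filter_upwards [ae_restrict_mem measurableSet_Ioi] with t ht
      have ht : 0 < t := ht
      refine tendsto_const_nhds.congr' ?_
      obtain ⟨N, hN⟩ := exists_nat_gt (2 / t)
      filter_upwards [Filter.eventually_ge_atTop N] with n hn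
      have h1 : (N : ℝ) ≤ n := by exact_mod_cast hn
      rw [div_lt_iff₀ ht] at hN
      have h2 : 1 ≤ ((n : ℝ) + 1) * t - 1 := by nlinarith
      simp only [η]
      rw [min_eq_left (h2.trans (le_max_right _ _)), mul_one]
  exact le_of_tendsto' (ENNReal.Tendsto.const_mul hlim (Or.inr ENNReal.ofReal_ne_top)) hb

theorem torsional_rigidity_isoperimetric_inequality
    (γ : ℝ) (hγ0 : 0 ≤ γ) (hγ1 : γ < 1)
    (O : Set (EuclideanSpace ℝ (Fin 2))) (hne : O.Nonempty) (hO : IsOpen O)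
    (hb : Bornology.IsBounded O) (hsb : SmoothBoundary O)
    (hsc : SimplyConnectedSpace O)
    (u : EuclideanSpace ℝ (Fin 2) → ℝ) (hu : IsTorsionFn γ O u) :
    ∫ x in O, u x ^ (1 + γ) ≤ ((1 + γ) / (8 * π)) * (∫ x in O, u x ^ γ) ^ 2 := by
  obtain ⟨huc, -, hu2, hul, hup, hu0⟩ := hu
  let v : E2 → ℝ := O.indicator u
  have hvO : ∀ x ∈ O, v x = u x := fun x hx => Set.indicator_of_mem hx u
  have hvn : ∀ x ∉ O, v x = 0 := fun x hx => Set.indicator_of_notMem hx u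
  have hn : ∀ x, 0 ≤ v x := fun x => by
    by_cases hx : x ∈ O
    · rw [hvO x hx]; exact (hup x hx).le
    · rw [hvn x hx]
  have hset : {x | 0 < v x} = O := by
    ext x
    simp only [Set.mem_ofPred_eq]
    by_cases hx : x ∈ O
    · simp [hx, hvO x hx, hup x hx]
    · simp [hx, hvn x hx]
  have hc : Continuous v := by
    refine continuous_indicator (fun x hx => hu0 x hx) huc
  have hs : HasCompactSupport v := by
    refine HasCompactSupport.of_support_subset_isCompact hb.isCompact_closure ?_
    exact Set.support_indicator_subset.trans subset_closure
  have hev : ∀ x ∈ O, v =ᶠ[nhds x] u := fun x hx => by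
    filter_upwards [hO.mem_nhds hx] with y hy using hvO y hy
  have hd : ContDiffOn ℝ 2 v {x | 0 < v x} := by
    rw [hset]; exact hu2.congr hvO
  have hl : ∀ x, 0 < v x → lap v x = -(v x ^ γ) := by
    intro x hx
    have hx : x ∈ O := by rw [← hset]; exact hx
    rw [hvO x hx, ← hul x hx, lap, lap, ((hev x hx).fderiv (𝕜 := ℝ)).fderiv_eq]
  have key := main_lint hγ0 hc hn hs hd hl
  have hfin := wm_finite hγ0 hc hs
  have e1 : ∫⁻ x, ENNReal.ofReal (v x ^ (1 + γ)) = ∫⁻ x in O, ENNReal.ofReal (u x ^ (1 + γ)) := by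
    rw [← lintegral_indicator hO.measurableSet]
    refine lintegral_congr fun x => ?_
    by_cases hx : x ∈ O
    · rw [Set.indicator_of_mem hx, hvO x hx]
    · rw [Set.indicator_of_notMem hx, hvn x hx, Real.zero_rpow (by linarith)]; simp
  have e2 : wm γ v Set.univ = ∫⁻ x in O, ENNReal.ofReal (u x ^ γ) := by
    rw [wm, withDensity_apply _ MeasurableSet.univ, Measure.restrict_univ, hset]
    refine setLIntegral_congr_fun hO.measurableSet fun x hx => ?_
    simp only [hvO x hx]
  have hcO : ContinuousOn u O := huc.mono subset_closure
  have i1 : ∫ x in O, u x ^ (1 + γ) = (∫⁻ x in O, ENNReal.ofReal (u x ^ (1 + γ))).toReal := by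
    refine integral_eq_lintegral_of_nonneg_ae ?_ ?_
    · filter_upwards [ae_restrict_mem hO.measurableSet] with x hx
      exact Real.rpow_nonneg (hup x hx).le _
    · exact (hcO.rpow_const fun x hx => Or.inr (by linarith)).aestronglyMeasurable hO.measurableSet
  have i2 : ∫ x in O, u x ^ γ = (∫⁻ x in O, ENNReal.ofReal (u x ^ γ)).toReal := by
    refine integral_eq_lintegral_of_nonneg_ae ?_ ?_
    · filter_upwards [ae_restrict_mem hO.measurableSet] with x hx
      exact Real.rpow_nonneg (hup x hx).le _
    · exact (hcO.rpow_const fun x hx => Or.inr hγ0).aestronglyMeasurable hO.measurableSet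
  have hk := ENNReal.toReal_mono (ENNReal.mul_ne_top ENNReal.ofReal_ne_top
    (ENNReal.pow_ne_top (measure_ne_top _ _))) key
  rw [ENNReal.toReal_mul, ENNReal.toReal_mul, ENNReal.toReal_pow,
    ENNReal.toReal_ofReal (by positivity), ENNReal.toReal_ofReal (by linarith), e1, e2,
    ← i1, ← i2] at hk
  rw [div_mul_eq_mul_div, le_div_iff₀ (by positivity)]
  linarith
end

section
/- Let γ ∈ [0,1), r > 0, and let u be a γ-torsion function of the disk B(0,r) ⊆ ℝ² that is radial, i.e. u(z) depends only on |z|. Then equality holds in the isoperimetric inequality: ∫_{B(0,r)} u^{1+γ} dA = ((1+γ)/(8π)) · (∫_{B(0,r)} u^γ dA)². -/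
open MeasureTheory Real

/-- the point with coordinates `a`, `b` -/
noncomputable def ptAB (a b : ℝ) : EuclideanSpace ℝ (Fin 2) :=
  a • EuclideanSpace.single 0 1 + b • EuclideanSpace.single 1 1

lemma ptAB_norm (a b : ℝ) : ‖ptAB a b‖ = √(a ^ 2 + b ^ 2) := by
  rw [EuclideanSpace.norm_eq]
  simp [ptAB, Fin.sum_univ_two]

lemma rot_zero {u : EuclideanSpace ℝ (Fin 2) → ℝ} {φ : ℝ → ℝ} (hφ : ∀ z, u z = φ ‖z‖) (a b : ℝ)
    (hd : DifferentiableAt ℝ u (ptAB a b)) :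
    a * fderiv ℝ u (ptAB a b) (EuclideanSpace.single 1 1)
      - b * fderiv ℝ u (ptAB a b) (EuclideanSpace.single 0 1) = 0 := by
  have hc : HasDerivAt (fun θ : ℝ => ptAB (a * cos θ - b * sin θ) (b * cos θ + a * sin θ))
      ((a * (-sin 0) - b * cos 0) • EuclideanSpace.single 0 1
        + (b * (-sin 0) + a * cos 0) • EuclideanSpace.single 1 1 : EuclideanSpace ℝ (Fin 2)) 0 := by
    unfold ptAB
    refine HasDerivAt.add (HasDerivAt.smul_const ?_ _) (HasDerivAt.smul_const ?_ _)
    · exact ((hasDerivAt_cos 0).const_mul a).sub ((hasDerivAt_sin 0).const_mul b)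
    · exact ((hasDerivAt_cos 0).const_mul b).add ((hasDerivAt_sin 0).const_mul a)
  have h0 : ptAB (a * cos 0 - b * sin 0) (b * cos 0 + a * sin 0) = ptAB a b := by simp
  have h1 := HasFDerivAt.comp_hasDerivAt (0 : ℝ) (h0 ▸ hd.hasFDerivAt) hc
  have h2 : (u ∘ fun θ : ℝ => ptAB (a * cos θ - b * sin θ) (b * cos θ + a * sin θ))
      = fun _ => φ (√(a ^ 2 + b ^ 2)) := by
    funext θ
    simp only [Function.comp, hφ, ptAB_norm]
    congr 2
    linear_combination (a ^ 2 + b ^ 2) * sin_sq_add_cos_sq θ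
  rw [h2] at h1
  have h3 := h1.unique (hasDerivAt_const _ _)
  simp only [map_add, map_smul, smul_eq_mul, h0] at h3
  simp only [sin_zero, cos_zero] at h3
  linarith

lemma integral_radial (f : ℝ → ℝ) (r : ℝ) (hr : 0 < r) :
    ∫ x in Metric.ball (0 : EuclideanSpace ℝ (Fin 2)) r, f ‖x‖ = 2 * π * ∫ s in (0 : ℝ)..r, s * f s := by
  have h1 : ∫ x in Metric.ball (0 : EuclideanSpace ℝ (Fin 2)) r, f ‖x‖
      = ∫ x : EuclideanSpace ℝ (Fin 2), (Set.Iio r).indicator f ‖x‖ := by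
    rw [← integral_indicator measurableSet_ball]
    congr 1
    funext x
    simp [Set.indicator]
  rw [h1, integral_fun_norm_addHaar]
  have h2 : volume.real (Metric.ball (0 : EuclideanSpace ℝ (Fin 2)) 1) = π := by
    simp [Measure.real, EuclideanSpace.volume_ball_fin_two, pi_nonneg]
  rw [h2, intervalIntegral.integral_of_le hr.le, ← integral_Ioc_eq_integral_Ioo.symm,
    ← integral_indicator measurableSet_Ioo, ← integral_indicator measurableSet_Ioi]
  simp only [finrank_euclideanSpace, Fintype.card_fin, nsmul_eq_mul, smul_eq_mul]
  push_cast
  rw [mul_assoc]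
  congr 3
  funext x
  by_cases h : 0 < x <;> by_cases h' : x < r <;> simp [Set.indicator, h, h']

theorem torsional_rigidity_isoperimetric_equality_radial
    (γ : ℝ) (hγ0 : 0 ≤ γ) (hγ1 : γ < 1) (r : ℝ) (hr : 0 < r)
    (u : EuclideanSpace ℝ (Fin 2) → ℝ)
    (hu : IsTorsionFn γ (Metric.ball (0 : EuclideanSpace ℝ (Fin 2)) r) u)
    (hrad : ∃ φ : ℝ → ℝ, ∀ z, u z = φ ‖z‖) :
    ∫ x in Metric.ball (0 : EuclideanSpace ℝ (Fin 2)) r, u x ^ (1 + γ) =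
      ((1 + γ) / (8 * π)) *
        (∫ x in Metric.ball (0 : EuclideanSpace ℝ (Fin 2)) r, u x ^ γ) ^ 2 := by
  obtain ⟨φ, hφ⟩ := hrad
  obtain ⟨hcont, -, hC2, hlap, hpos, hbd⟩ := hu
  rw [closure_ball _ hr.ne'] at hcont
  rw [frontier_ball _ hr.ne'] at hbd
  let e0 : EuclideanSpace ℝ (Fin 2) := EuclideanSpace.single 0 1
  let e1 : EuclideanSpace ℝ (Fin 2) := EuclideanSpace.single 1 1
  have hn : ∀ s, 0 ≤ s → ‖ptAB s 0‖ = s := fun s hs => by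
    simp [ptAB_norm, Real.sqrt_sq hs]
  set g : ℝ → ℝ := fun s => u (ptAB s 0) with hg
  have hug : ∀ z, u z = g ‖z‖ := fun z => by
    simp only [hg]; rw [hφ, hφ (ptAB _ _), hn _ (norm_nonneg z)]
  have hball : ∀ s ∈ Set.Ico 0 r, ptAB s 0 ∈ Metric.ball (0 : EuclideanSpace ℝ (Fin 2)) r := fun s hs => by
    rw [mem_ball_zero_iff, hn s hs.1]; exact hs.2
  have hline0 : ∀ s, HasDerivAt (fun t => ptAB t 0) e0 s := fun s => by
    unfold ptAB
    simpa using ((hasDerivAt_id s).smul_const e0).add_const ((0 : ℝ) • e1)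
  have hline1 : ∀ s t, HasDerivAt (fun t => ptAB s t) e1 t := fun s t => by
    unfold ptAB
    simpa using ((hasDerivAt_id t).smul_const e1).const_add (s • e0)
  have hgc : ContinuousOn g (Set.Icc 0 r) := by
    refine hcont.comp (fun s _ => (hline0 s).continuousAt.continuousWithinAt) fun s hs => ?_
    rw [mem_closedBall_zero_iff, hn s hs.1]; exact hs.2
  have hgr : g r = 0 := hbd _ (by simp [hn r hr.le])
  have hgpos : ∀ s ∈ Set.Ico 0 r, 0 < g s := fun s hs => hpos _ (hball s hs)
  have hcd : ∀ x ∈ Metric.ball (0 : EuclideanSpace ℝ (Fin 2)) r, ContDiffAt ℝ 2 u x := fun x hx =>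
    hC2.contDiffAt (Metric.isOpen_ball.mem_nhds hx)
  have hd1 : ∀ x ∈ Metric.ball (0 : EuclideanSpace ℝ (Fin 2)) r, DifferentiableAt ℝ u x := fun x hx =>
    (hcd x hx).differentiableAt (by norm_num)
  have hd2 : ∀ x ∈ Metric.ball (0 : EuclideanSpace ℝ (Fin 2)) r, DifferentiableAt ℝ (fderiv ℝ u) x := fun x hx =>
    ((hcd x hx).fderiv_right (m := 1) (by norm_num)).differentiableAt (by norm_num)
  set g' : ℝ → ℝ := fun s => fderiv ℝ u (ptAB s 0) e0 with hg'
  have hgd : ∀ s ∈ Set.Ico 0 r, HasDerivAt g (g' s) s := fun s hs =>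
    (hd1 _ (hball s hs)).hasFDerivAt.comp_hasDerivAt s (hline0 s)
  have hDline : ∀ (v w : EuclideanSpace ℝ (Fin 2)) (c : ℝ → EuclideanSpace ℝ (Fin 2)) (t : ℝ), HasDerivAt c w t →
      c t ∈ Metric.ball (0 : EuclideanSpace ℝ (Fin 2)) r →
      HasDerivAt (fun t => fderiv ℝ u (c t) v) (fderiv ℝ (fderiv ℝ u) (c t) w v) t := by
    intro v w c t hc ht
    have h := (hd2 _ ht).hasFDerivAt.comp_hasDerivAt t hc
    simpa using h.clm_apply (hasDerivAt_const t v)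
  have hgd' : ∀ s ∈ Set.Ico 0 r,
      HasDerivAt g' (fderiv ℝ (fderiv ℝ u) (ptAB s 0) e0 e0) s := fun s hs =>
    hDline e0 e0 _ s (hline0 s) (hball s hs)
  have hang : ∀ s ∈ Set.Ico 0 r, s * fderiv ℝ (fderiv ℝ u) (ptAB s 0) e1 e1 = g' s := by
    intro s hs
    have h1 := (hDline e1 e1 _ 0 (hline1 s 0) (hball s hs)).const_mul s
    have h2 := (hasDerivAt_id (0 : ℝ)).mul (hDline e0 e1 _ 0 (hline1 s 0) (hball s hs))
    have h3 := h1.sub h2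
    have hev : ∀ᶠ t in nhds (0 : ℝ), ptAB s t ∈ Metric.ball (0 : EuclideanSpace ℝ (Fin 2)) r :=
      (hline1 s 0).continuousAt.eventually_mem (Metric.isOpen_ball.mem_nhds (hball s hs))
    have h4 := h3.unique ((hasDerivAt_const (0 : ℝ) (0 : ℝ)).congr_of_eventuallyEq (by
      filter_upwards [hev] with t ht
      exact rot_zero hφ s t (hd1 _ ht)))
    simp only [id, one_mul, zero_mul, add_zero] at h4
    simp only [hg']
    linarith
  have hF : ∀ s ∈ Set.Ico 0 r, s ≠ 0 → HasDerivAt (fun s => s * g' s) (-(s * g s ^ γ)) s := by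
    intro s hs hs0
    have h := (hasDerivAt_id s).mul (hgd' s hs)
    refine h.congr_deriv ?_
    have hl := hlap _ (hball s hs)
    simp only [lap, Fin.sum_univ_two] at hl
    have ha := hang s hs
    simp only [id, one_mul, hg]
    rw [← ha]
    linear_combination s * hl
  have hfc : ContinuousOn (fun s => s * g s ^ γ) (Set.Icc 0 r) :=
    continuousOn_id.mul (hgc.rpow_const fun _ _ => Or.inr hγ0)
  have hfi : ∀ ρ ∈ Set.Icc 0 r, IntervalIntegrable (fun s => s * g s ^ γ) volume 0 ρ :=
    fun ρ hρ => ContinuousOn.intervalIntegrable_of_Icc hρ.1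
      (hfc.mono (Set.Icc_subset_Icc_right hρ.2))
  set I : ℝ → ℝ := fun ρ => ∫ s in (0 : ℝ)..ρ, s * g s ^ γ with hI
  have hIF : ∀ ρ ∈ Set.Ico 0 r, ρ * g' ρ = - I ρ := by
    intro ρ hρ
    have h := intervalIntegral.integral_eq_sub_of_hasDerivAt_of_le hρ.1
      (f := fun s => s * g' s) (f' := fun s => -(s * g s ^ γ)) ?_ ?_
      (hfi ρ ⟨hρ.1, hρ.2.le⟩).neg
    · rw [intervalIntegral.integral_neg] at h
      simp only [zero_mul, sub_zero] at h
      exact h.symm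
    · exact continuousOn_id.mul fun s hs =>
        (hgd' s ⟨hs.1, hs.2.trans_lt hρ.2⟩).continuousAt.continuousWithinAt
    · exact fun s hs => hF s ⟨hs.1.le, hs.2.trans hρ.2⟩ hs.1.ne'
  have hIc : ContinuousOn I (Set.Icc 0 r) := by
    have h := intervalIntegral.continuousOn_primitive_interval
      (f := fun s => s * g s ^ γ) (a := 0) (b := r) (μ := volume)
      (by rw [Set.uIcc_of_le hr.le]; exact hfc.integrableOn_Icc)
    rwa [Set.uIcc_of_le hr.le] at h
  have hId : ∀ s ∈ Set.Ioo 0 r, HasDerivAt I (s * g s ^ γ) s := by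
    intro s hs
    refine intervalIntegral.integral_hasDerivAt_right (hfi s ⟨hs.1.le, hs.2.le⟩) ?_ ?_
    · exact (hfc.mono Set.Ioo_subset_Icc_self).stronglyMeasurableAtFilter isOpen_Ioo s hs
    · exact hfc.continuousAt (Icc_mem_nhds hs.1 hs.2)
  have hγ : 1 + γ ≠ 0 := by positivity
  have hpc : ContinuousOn (fun s => g s ^ (1 + γ)) (Set.Icc 0 r) :=
    hgc.rpow_const fun _ _ => Or.inr (by positivity)
  have key := intervalIntegral.integral_eq_sub_of_hasDerivAt_of_le hr.le
      (f := fun s => (1 + γ) * I s ^ 2 / 2 + s ^ 2 * g s ^ (1 + γ))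
      (f' := fun s => 2 * (s * g s ^ (1 + γ))) ?_ ?_ ?_
  rotate_left
  · exact ((continuousOn_const.mul (hIc.pow 2)).div_const 2).add
      ((continuousOn_id.pow 2).mul hpc)
  · intro s hs
    have hs' : s ∈ Set.Ico 0 r := ⟨hs.1.le, hs.2⟩
    have h1 := (((hId s hs).pow 2).const_mul (1 + γ)).div_const 2
    have h2 := ((hasDerivAt_id s).pow 2).mul
      ((hgd s hs').rpow_const (p := 1 + γ) (Or.inl (hgpos s hs').ne'))
    refine (h1.add h2).congr_deriv ?_
    have h3 := hIF s hs'
    simp only [id, add_sub_cancel_left, Pi.pow_apply]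
    push_cast
    linear_combination (1 + γ) * s * g s ^ γ * h3
  · exact ContinuousOn.intervalIntegrable_of_Icc hr.le
      (continuousOn_const.mul (continuousOn_id.mul hpc))
  have hI0 : I 0 = 0 := by simp [hI]
  rw [intervalIntegral.integral_const_mul] at key
  simp only [hgr, hI0, Real.zero_rpow hγ] at key
  have e1' : ∫ x in Metric.ball (0 : EuclideanSpace ℝ (Fin 2)) r, u x ^ (1 + γ)
      = 2 * π * ∫ s in (0 : ℝ)..r, s * g s ^ (1 + γ) := by
    rw [← integral_radial (fun s => g s ^ (1 + γ)) r hr]; simp only [← hug]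
  have e2' : ∫ x in Metric.ball (0 : EuclideanSpace ℝ (Fin 2)) r, u x ^ γ = 2 * π * I r := by
    rw [hI, ← integral_radial (fun s => g s ^ γ) r hr]; simp only [← hug]
  rw [e1', e2']
  have hpi := pi_ne_zero
  field_simp
  linarith
end

section
/- Let γ ∈ [0,1) and 0 < R ≤ ∞. Suppose U : (0,R) × ℝ² → ℝ, written U(r,z) = u_r(z), is continuously differentiable jointly in (r,z), and for each r ∈ (0,R) the function u_r is a γ-torsion function of the disk B(0,r) ⊆ ℝ² ≅ ℂ. Then the function T(r) := ∫_{B(0,r)} |∇u_r|² dA is differentiable on (0,R) and T′(r) = ((1+γ)/(1−γ)) · r · ∫_0^{2π} |∇u_r(r e^{iθ})|² dθ. (This is the paper's first variation formula (3.2) applied to the radial dilation flow of disks, identity (4.3).) -/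
open MeasureTheory Real ENNReal

/-- The Euclidean Laplacian on `ℝ² ≅ ℂ`. -/
noncomputable def lapC (u : ℂ → ℝ) (x : ℂ) : ℝ :=
  fderiv ℝ (fderiv ℝ u) x 1 1 + fderiv ℝ (fderiv ℝ u) x Complex.I Complex.I

/-- `u` is a `γ`-torsion function of `O ⊆ ℂ`: continuous on the closure, `C¹` up to the
boundary, `C²` inside, with `Δu = -u^γ`, `u > 0` in `O` and `u = 0` on `∂O`. -/
def IsTorsionFnC (γ : ℝ) (O : Set ℂ) (u : ℂ → ℝ) : Prop :=
  ContinuousOn u (closure O) ∧ ContDiffOn ℝ 1 u (closure O) ∧ ContDiffOn ℝ 2 u O ∧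
  (∀ x ∈ O, lapC u x = -(u x ^ γ)) ∧ (∀ x ∈ O, 0 < u x) ∧ (∀ x ∈ frontier O, u x = 0)

section helpers
open Metric Set Filter Topology

lemma disc_divergence (P Q D : ℂ → ℝ) (P' Q' : ℂ → ℂ →L[ℝ] ℝ)
    (hP : ContinuousOn P (closedBall 0 1)) (hQ : ContinuousOn Q (closedBall 0 1))
    (hD : ContinuousOn D (closedBall 0 1))
    (hP' : ∀ z ∈ ball (0 : ℂ) 1, HasFDerivAt P (P' z) z)
    (hQ' : ∀ z ∈ ball (0 : ℂ) 1, HasFDerivAt Q (Q' z) z)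
    (hdiv : ∀ z ∈ ball (0 : ℂ) 1, P' z 1 + Q' z Complex.I = D z) :
    ∫ z in ball (0 : ℂ) 1, D z =
      ∫ θ in (-π)..π, (P (Complex.exp (θ * Complex.I)) * Real.cos θ
        + Q (Complex.exp (θ * Complex.I)) * Real.sin θ) := by
  set Z : ℝ × ℝ → ℂ := fun p => (p.1 : ℂ) * (Real.cos p.2 + Real.sin p.2 * Complex.I) with hZ
  have hZc : Continuous Z := by
    simp only [hZ]; fun_prop
  have hnorm : ∀ p, ‖Z p‖ = |p.1| := by
    intro p
    have := Complex.norm_polarCoord_symm p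
    rwa [Complex.polarCoord_symm_apply] at this
  have hZball : ∀ p : ℝ × ℝ, p ∈ Ioo (0:ℝ) 1 ×ˢ Ioo (-π) π → Z p ∈ ball (0 : ℂ) 1 := by
    intro p hp
    rw [mem_ball_zero_iff, hnorm, abs_of_pos hp.1.1]
    exact hp.1.2
  have hZcball : ∀ p : ℝ × ℝ, p ∈ Icc (0:ℝ) 1 ×ˢ Icc (-π) π → Z p ∈ closedBall (0 : ℂ) 1 := by
    intro p hp
    rw [mem_closedBall_zero_iff, hnorm, abs_of_nonneg hp.1.1]
    exact hp.1.2
  let Z' : ℝ × ℝ → ℝ × ℝ →L[ℝ] ℂ := fun p =>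
    Complex.equivRealProdCLM.symm.toContinuousLinearMap.comp (fderivPolarCoordSymm p)
  have hZ' : ∀ p, HasFDerivAt Z (Z' p) p := by
    intro p
    have h1 : HasFDerivAt (fun q => Complex.equivRealProdCLM.symm (polarCoord.symm q)) (Z' p) p :=
      (Complex.equivRealProdCLM.symm.toContinuousLinearMap.hasFDerivAt).comp p
        (hasFDerivAt_polarCoord_symm p)
    refine h1.congr_of_eventuallyEq (Eventually.of_forall fun q => ?_)
    have := Complex.polarCoord_symm_apply q
    rw [hZ]; simp only; rw [← this]; rfl
  have hZ1 : ∀ p, Z' p (1, 0) = (Real.cos p.2) • (1 : ℂ) + (Real.sin p.2) • Complex.I := by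
    intro p
    apply Complex.ext <;> simp [Z', fderivPolarCoordSymm, Matrix.toLin_finTwoProd_toContinuousLinearMap, Complex.equivRealProdCLM_symm_apply, -Complex.ofReal_cos, -Complex.ofReal_sin]
  have hZ2 : ∀ p, Z' p (0, 1) = (-(p.1 * Real.sin p.2)) • (1 : ℂ) + (p.1 * Real.cos p.2) • Complex.I := by
    intro p
    apply Complex.ext <;> simp [Z', fderivPolarCoordSymm, Matrix.toLin_finTwoProd_toContinuousLinearMap, Complex.equivRealProdCLM_symm_apply, -Complex.ofReal_cos, -Complex.ofReal_sin]
  set f : ℝ × ℝ → ℝ := fun p => P (Z p) * (p.1 * Real.cos p.2) + Q (Z p) * (p.1 * Real.sin p.2) with hf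
  set g : ℝ × ℝ → ℝ := fun p => Q (Z p) * Real.cos p.2 - P (Z p) * Real.sin p.2 with hg
  have key : ∀ p ∈ Ioo (0:ℝ) 1 ×ˢ Ioo (-π) π, ∃ f' g' : ℝ × ℝ →L[ℝ] ℝ,
      HasFDerivAt f f' p ∧ HasFDerivAt g g' p ∧ f' (1,0) + g' (0,1) = p.1 * D (Z p) := by
    intro p hp
    have hb := hZball p hp
    have hp1 := (hP' _ hb).comp p (hZ' p)
    have hq1 := (hQ' _ hb).comp p (hZ' p)
    have hc : HasFDerivAt (fun q : ℝ × ℝ => Real.cos q.2) _ p :=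
      (Real.hasDerivAt_cos p.2).comp_hasFDerivAt p (hasFDerivAt_snd (𝕜 := ℝ) (E := ℝ) (F := ℝ))
    have hs : HasFDerivAt (fun q : ℝ × ℝ => Real.sin q.2) _ p :=
      (Real.hasDerivAt_sin p.2).comp_hasFDerivAt p (hasFDerivAt_snd (𝕜 := ℝ) (E := ℝ) (F := ℝ))
    have hr : HasFDerivAt (fun q : ℝ × ℝ => q.1) _ p := hasFDerivAt_fst (𝕜 := ℝ) (E := ℝ) (F := ℝ)
    refine ⟨_, _, (hp1.mul (hr.mul hc)).add (hq1.mul (hr.mul hs)), (hq1.mul hc).sub (hp1.mul hs), ?_⟩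
    simp only [add_apply, sub_apply, smul_apply,
      ContinuousLinearMap.comp_apply, hZ1, hZ2, map_add, map_smul, ← hdiv _ hb, smul_eq_mul,
      ContinuousLinearMap.coe_fst', ContinuousLinearMap.coe_snd', Function.comp, Pi.mul_apply]
    linear_combination (p.1 * (P' (Z p) 1 + Q' (Z p) Complex.I)) * (Real.sin_sq_add_cos_sq p.2)
  choose! f' g' hf' hg' hfg using key
  have hae : Icc ((0:ℝ), (-π)) (1, π) =ᵐ[volume] Ioo (0:ℝ) 1 ×ˢ Ioo (-π) π := by
    rw [← Icc_prod_Icc]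
    exact Measure.set_prod_ae_eq Ioo_ae_eq_Icc.symm Ioo_ae_eq_Icc.symm
  have hDc : ContinuousOn (fun p : ℝ × ℝ => p.1 * D (Z p)) (Icc (0:ℝ) 1 ×ˢ Icc (-π) π) :=
    continuousOn_fst.mul (hD.comp hZc.continuousOn hZcball)
  have hPc : ContinuousOn (fun p : ℝ × ℝ => P (Z p)) (Icc (0:ℝ) 1 ×ˢ Icc (-π) π) :=
    hP.comp hZc.continuousOn hZcball
  have hQc : ContinuousOn (fun p : ℝ × ℝ => Q (Z p)) (Icc (0:ℝ) 1 ×ˢ Icc (-π) π) :=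
    hQ.comp hZc.continuousOn hZcball
  have hmeas : MeasurableSet (Ioo (0:ℝ) 1 ×ˢ Ioo (-π) π) := measurableSet_Ioo.prod measurableSet_Ioo
  have hinteg : IntegrableOn (fun p => f' p (1,0) + g' p (0,1)) (Icc ((0:ℝ), (-π)) (1, π)) := by
    rw [integrableOn_congr_set_ae hae]
    refine IntegrableOn.congr_fun ?_ (fun p hp => (hfg p hp).symm) hmeas
    exact (hDc.integrableOn_compact (isCompact_Icc.prod isCompact_Icc)).mono_set
      (prod_mono Ioo_subset_Icc_self Ioo_subset_Icc_self)
  have main := integral_divergence_prod_Icc_of_hasFDerivAt_off_countable_of_le f g f' g'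
    ((0:ℝ), (-π)) (1, π) ⟨zero_le_one, by simp; linarith [pi_pos]⟩ ∅ countable_empty
    (by
      rw [← Icc_prod_Icc]
      exact (hPc.mul (by fun_prop)).add (hQc.mul (by fun_prop)))
    (by
      rw [← Icc_prod_Icc]
      exact (hQc.mul (by fun_prop)).sub (hPc.mul (by fun_prop)))
    (fun x hx => hf' x hx.1) (fun x hx => hg' x hx.1) hinteg
  have e1 : ∫ z in ball (0 : ℂ) 1, D z = ∫ p in Icc ((0:ℝ), (-π)) (1, π), (f' p (1,0) + g' p (0,1)) := by
    rw [setIntegral_congr_set hae, setIntegral_congr_fun hmeas hfg,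
      ← integral_indicator measurableSet_ball, ← Complex.integral_comp_polarCoord_symm,
      ← integral_indicator hmeas, ← integral_indicator polarCoord.open_target.measurableSet]
    congr 1
    ext p
    simp only [Complex.polarCoord_symm_apply]
    have hn := hnorm p
    by_cases h1 : p ∈ polarCoord.target
    · rw [indicator_of_mem h1]
      rw [polarCoord_target] at h1
      have h0 : 0 < p.1 := h1.1
      by_cases h2 : p.1 < 1
      · rw [indicator_of_mem (s := Ioo (0:ℝ) 1 ×ˢ Ioo (-π) π) ⟨⟨h0, h2⟩, h1.2⟩, indicator_of_mem]
        · rfl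
        · exact hZball p ⟨⟨h0, h2⟩, h1.2⟩
      · rw [indicator_of_notMem (s := Ioo (0:ℝ) 1 ×ˢ Ioo (-π) π) (fun h => h2 h.1.2), indicator_of_notMem]
        · simp
        · rw [mem_ball_zero_iff]
          change ¬ ‖Z p‖ < 1
          rwa [hn, abs_of_pos h0]
    · rw [indicator_of_notMem h1, indicator_of_notMem]
      intro h
      exact h1 ⟨h.1.1, h.2⟩
  rw [e1, main]
  have g0 : ∀ x, g (x, π) = g (x, -π) := by
    intro x; simp [hg, hZ]
  have f0 : ∀ x, f (0, x) = 0 := by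
    intro x; simp [hf]
  have f1 : ∀ x, f (1, x) = P (Complex.exp (x * Complex.I)) * Real.cos x
        + Q (Complex.exp (x * Complex.I)) * Real.sin x := by
    intro x; simp [hf, hZ, Complex.exp_mul_I]
  simp [g0, f0, f1]

lemma disc_divergence' (P Q D : ℂ → ℝ)
    (hP : ContinuousOn P (closedBall 0 1)) (hQ : ContinuousOn Q (closedBall 0 1))
    (hD : ContinuousOn D (closedBall 0 1))
    (h : ∀ z ∈ ball (0 : ℂ) 1, ∃ P' Q' : ℂ →L[ℝ] ℝ, HasFDerivAt P P' z ∧ HasFDerivAt Q Q' z ∧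
      P' 1 + Q' Complex.I = D z) :
    ∫ z in ball (0 : ℂ) 1, D z =
      ∫ θ in (-π)..π, (P (Complex.exp (θ * Complex.I)) * Real.cos θ
        + Q (Complex.exp (θ * Complex.I)) * Real.sin θ) := by
  choose! P' Q' h1 h2 h3 using h
  exact disc_divergence P Q D P' Q' hP hQ hD h1 h2 h3

/-- `v` solves `Δ v = -f` in the unit disk with zero boundary values; `(p, q)` is its gradient. -/
structure DiskSol (v p q f : ℂ → ℝ) : Prop where
  cv : ContinuousOn v (closedBall 0 1)
  cp : ContinuousOn p (closedBall 0 1)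
  cq : ContinuousOn q (closedBall 0 1)
  cf : ContinuousOn f (closedBall 0 1)
  dv : ∀ z ∈ ball (0 : ℂ) 1, ∃ L : ℂ →L[ℝ] ℝ, HasFDerivAt v L z ∧ L 1 = p z ∧ L Complex.I = q z
  dpq : ∀ z ∈ ball (0 : ℂ) 1, ∃ A B : ℂ →L[ℝ] ℝ, HasFDerivAt p A z ∧ HasFDerivAt q B z ∧
    A 1 + B Complex.I = - f z ∧ A Complex.I = B 1
  bd : ∀ θ : ℝ, v (Complex.exp (θ * Complex.I)) = 0
  tang : ∀ θ : ℝ, q (Complex.exp (θ * Complex.I)) * Real.cos θ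
    = p (Complex.exp (θ * Complex.I)) * Real.sin θ

lemma integrable_ball {f : ℂ → ℝ} (hf : ContinuousOn f (closedBall 0 1)) :
    IntegrableOn f (ball 0 1) :=
  (hf.integrableOn_compact (isCompact_closedBall 0 1)).mono_set ball_subset_closedBall

lemma DiskSol.green {v p q f v₂ p₂ q₂ f₂ : ℂ → ℝ} (h : DiskSol v p q f)
    (h₂ : DiskSol v₂ p₂ q₂ f₂) :
    ∫ z in ball (0 : ℂ) 1, (p z * p₂ z + q z * q₂ z) = ∫ z in ball (0 : ℂ) 1, v z * f₂ z := by
  have c1 : ContinuousOn (fun z => p z * p₂ z + q z * q₂ z) (closedBall 0 1) :=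
    (h.cp.mul h₂.cp).add (h.cq.mul h₂.cq)
  have c2 : ContinuousOn (fun z => v z * f₂ z) (closedBall 0 1) := h.cv.mul h₂.cf
  have := disc_divergence' (fun z => v z * p₂ z) (fun z => v z * q₂ z)
    (fun z => (p z * p₂ z + q z * q₂ z) - v z * f₂ z) (h.cv.mul h₂.cp) (h.cv.mul h₂.cq)
    (c1.sub c2) (by
      intro z hz
      obtain ⟨L, hL, hL1, hL2⟩ := h.dv z hz
      obtain ⟨A, B, hA, hB, hAB, -⟩ := h₂.dpq z hz
      refine ⟨_, _, hL.mul hA, hL.mul hB, ?_⟩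
      simp only [_root_.add_apply, _root_.smul_apply, smul_eq_mul, hL1, hL2]
      linear_combination (v z) * hAB)
  rw [integral_sub (integrable_ball c1) (integrable_ball c2)] at this
  simp only [h.bd, zero_mul, add_zero, intervalIntegral.integral_zero] at this
  linarith

lemma DiskSol.pohozaev {v p q f : ℂ → ℝ} (h : DiskSol v p q f) {γ c : ℝ} (hγ : 0 ≤ γ)
    (hpos : ∀ z ∈ ball (0 : ℂ) 1, 0 < v z) (hf : ∀ z ∈ ball (0 : ℂ) 1, f z = c * v z ^ γ) :
    c * ∫ z in ball (0 : ℂ) 1, v z ^ (1 + γ) = (1 + γ) / 4 *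
      ∫ θ in (-π)..π, (p (Complex.exp (θ * Complex.I)) ^ 2 + q (Complex.exp (θ * Complex.I)) ^ 2) := by
  have hγ' : (1 + γ) ≠ 0 := by positivity
  have cre : ContinuousOn (fun z : ℂ => z.re) (closedBall 0 1) := Complex.continuous_re.continuousOn
  have cim : ContinuousOn (fun z : ℂ => z.im) (closedBall 0 1) := Complex.continuous_im.continuousOn
  have cW : ContinuousOn (fun z => v z ^ (1 + γ)) (closedBall 0 1) :=
    h.cv.rpow_const (fun _ _ => Or.inr (by positivity))
  have cX : ContinuousOn (fun z => z.re * p z + z.im * q z) (closedBall 0 1) :=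
    (cre.mul h.cp).add (cim.mul h.cq)
  have cY : ContinuousOn (fun z => c / (1 + γ) * v z ^ (1 + γ) - (p z * p z + q z * q z) * (1/2)) (closedBall 0 1) :=
    (continuousOn_const.mul cW).sub (((h.cp.mul h.cp).add (h.cq.mul h.cq)).mul continuousOn_const)
  have := disc_divergence'
    (fun z => (z.re * p z + z.im * q z) * p z
      + z.re * (c / (1 + γ) * v z ^ (1 + γ) - (p z * p z + q z * q z) * (1/2)))
    (fun z => (z.re * p z + z.im * q z) * q z
      + z.im * (c / (1 + γ) * v z ^ (1 + γ) - (p z * p z + q z * q z) * (1/2)))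
    (fun z => 2 * c / (1 + γ) * v z ^ (1 + γ))
    ((cX.mul h.cp).add (cre.mul cY)) ((cX.mul h.cq).add (cim.mul cY)) (continuousOn_const.mul cW) (by
      intro z hz
      obtain ⟨L, hL, hL1, hL2⟩ := h.dv z hz
      obtain ⟨A, B, hA, hB, hAB, hAB'⟩ := h.dpq z hz
      have hre : HasFDerivAt (fun z : ℂ => z.re) Complex.reCLM z := Complex.reCLM.hasFDerivAt
      have him : HasFDerivAt (fun z : ℂ => z.im) Complex.imCLM z := Complex.imCLM.hasFDerivAt
      have hX := (hre.mul hA).add (him.mul hB)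
      have hW := hL.rpow_const (p := 1 + γ) (Or.inl (hpos z hz).ne')
      have hY := (hW.const_mul (c / (1 + γ))).sub (((hA.mul hA).add (hB.mul hB)).mul_const (1/2))
      refine ⟨_, _, (hX.mul hA).add (hre.mul hY), (hX.mul hB).add (him.mul hY), ?_⟩
      simp only [_root_.add_apply, _root_.sub_apply,
        _root_.smul_apply, smul_eq_mul, hL1, hL2,
        Complex.reCLM_apply, Complex.imCLM_apply, Complex.one_re, Complex.one_im, Complex.I_re,
        Complex.I_im, add_sub_cancel_left, hAB', Pi.add_apply, Pi.mul_apply]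
      have e := hf z hz
      rw [e] at hAB
      field_simp
      linear_combination ((1 + γ) * (z.re * p z + z.im * q z)) * hAB * 2)
  rw [integral_const_mul] at this
  have e2 : ∀ θ : ℝ, ((((Complex.exp (θ * Complex.I)).re * p (Complex.exp (θ * Complex.I))
      + (Complex.exp (θ * Complex.I)).im * q (Complex.exp (θ * Complex.I))) * p (Complex.exp (θ * Complex.I))
      + (Complex.exp (θ * Complex.I)).re * (c / (1 + γ) * v (Complex.exp (θ * Complex.I)) ^ (1 + γ)
        - (p (Complex.exp (θ * Complex.I)) * p (Complex.exp (θ * Complex.I))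
        + q (Complex.exp (θ * Complex.I)) * q (Complex.exp (θ * Complex.I))) * (1/2))) * Real.cos θ
      + (((Complex.exp (θ * Complex.I)).re * p (Complex.exp (θ * Complex.I))
      + (Complex.exp (θ * Complex.I)).im * q (Complex.exp (θ * Complex.I))) * q (Complex.exp (θ * Complex.I))
      + (Complex.exp (θ * Complex.I)).im * (c / (1 + γ) * v (Complex.exp (θ * Complex.I)) ^ (1 + γ)
        - (p (Complex.exp (θ * Complex.I)) * p (Complex.exp (θ * Complex.I))
        + q (Complex.exp (θ * Complex.I)) * q (Complex.exp (θ * Complex.I))) * (1/2))) * Real.sin θ)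
      = (1/2) * (p (Complex.exp (θ * Complex.I)) ^ 2 + q (Complex.exp (θ * Complex.I)) ^ 2) := by
    intro θ
    have ht := h.tang θ
    rw [h.bd θ, Real.zero_rpow hγ', Complex.exp_ofReal_mul_I_re, Complex.exp_ofReal_mul_I_im]
    generalize p (Complex.exp (θ * Complex.I)) = a at *
    generalize q (Complex.exp (θ * Complex.I)) = b at *
    have hs := Real.sin_sq_add_cos_sq θ
    linear_combination (1/2) * (a^2 + b^2) * hs - (b * Real.cos θ - a * Real.sin θ) * ht
  simp only [e2] at this
  rw [intervalIntegral.integral_const_mul] at this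
  generalize (∫ θ in (-π)..π, (p (Complex.exp (θ * Complex.I)) ^ 2
    + q (Complex.exp (θ * Complex.I)) ^ 2)) = K at this ⊢
  generalize (∫ z in ball (0 : ℂ) 1, v z ^ (1 + γ)) = J at this ⊢
  field_simp at this ⊢
  linarith

lemma norm_gradient_sq (u : ℂ → ℝ) (z : ℂ) :
    ‖gradient u z‖ ^ 2 = fderiv ℝ u z 1 ^ 2 + fderiv ℝ u z Complex.I ^ 2 := by
  have h : ∀ v, inner ℝ (gradient u z) v = fderiv ℝ u z v := fun v => by
    rw [gradient, InnerProductSpace.toDual_symm_apply]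
  have h1 : (gradient u z).re = fderiv ℝ u z 1 := by
    rw [← h 1, Complex.inner]; simp
  have h2 : (gradient u z).im = fderiv ℝ u z Complex.I := by
    rw [← h Complex.I, Complex.inner]; simp
  rw [← h1, ← h2, Complex.sq_norm, Complex.normSq_apply]
  ring

lemma torsion_diskSol {γ s : ℝ} (hγ : 0 ≤ γ) (hs : 0 < s) {u : ℂ → ℝ} (hu : ContDiff ℝ 1 u)
    (ht : IsTorsionFnC γ (ball 0 s) u) :
    DiskSol (fun w => u (s • w)) (fun w => s * fderiv ℝ u (s • w) 1)
      (fun w => s * fderiv ℝ u (s • w) Complex.I) (fun w => s ^ 2 * u (s • w) ^ γ) := by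
  obtain ⟨-, -, h2, hlap, hpos, hbd⟩ := ht
  have hc := hu.continuous
  have hc' : Continuous (fderiv ℝ u) := hu.continuous_fderiv (by norm_num)
  have hball : ∀ z ∈ ball (0 : ℂ) 1, s • z ∈ ball (0 : ℂ) s := by
    intro z hz
    rw [mem_ball_zero_iff] at hz ⊢
    rw [norm_smul, Real.norm_of_nonneg hs.le]
    nlinarith
  have hsm : ∀ z : ℂ, HasFDerivAt (fun w : ℂ => s • w) (s • ContinuousLinearMap.id ℝ ℂ) z :=
    fun z => (hasFDerivAt_id z).const_smul s
  have hbd' : ∀ θ : ℝ, u (s • Complex.exp (θ * Complex.I)) = 0 := by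
    intro θ
    apply hbd
    rw [frontier_ball _ hs.ne', mem_sphere_zero_iff_norm, norm_smul, Complex.norm_exp_ofReal_mul_I,
      Real.norm_of_nonneg hs.le, mul_one]
  refine ⟨by fun_prop, by fun_prop, by fun_prop, ?_, ?_, ?_, hbd', ?_⟩
  · exact (continuous_const.mul ((hc.comp (continuous_const_smul s)).rpow_const
      (fun _ => Or.inr hγ))).continuousOn
  · intro z hz
    refine ⟨_, ((hu.differentiable (by norm_num) (s • z)).hasFDerivAt).comp z (hsm z), ?_, ?_⟩ <;> simp
  · intro z hz
    have hz' := hball z hz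
    have hat : ContDiffAt ℝ 2 u (s • z) := h2.contDiffAt (isOpen_ball.mem_nhds hz')
    have hd : DifferentiableAt ℝ (fderiv ℝ u) (s • z) :=
      (hat.fderiv_right (m := 1) (by norm_num)).differentiableAt (by norm_num)
    have hsymm : IsSymmSndFDerivAt ℝ u (s • z) := hat.isSymmSndFDerivAt (by simp)
    have hF := (hd.hasFDerivAt).comp z (hsm z)
    have hA := (hF.clm_apply (hasFDerivAt_const (1 : ℂ) z)).const_mul s
    have hB := (hF.clm_apply (hasFDerivAt_const (Complex.I : ℂ) z)).const_mul s
    refine ⟨_, _, hA, hB, ?_, ?_⟩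
    · have := hlap _ hz'
      rw [lapC] at this
      simp
      linear_combination s ^ 2 * this
    · simp
      left
      exact hsymm _ _
  · intro θ
    have he : HasDerivAt (fun t : ℝ => s • Complex.exp (t * Complex.I))
        (s • (Complex.exp (θ * Complex.I) * Complex.I)) θ := by
      have h1 : HasDerivAt (fun t : ℝ => (t : ℂ) * Complex.I) Complex.I θ := by
        simpa using (Complex.ofRealCLM.hasDerivAt (x := θ)).mul_const Complex.I
      exact h1.cexp.const_smul s
    have h1 := ((hu.differentiable (by norm_num)
      (s • Complex.exp (θ * Complex.I))).hasFDerivAt).comp_hasDerivAt θ he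
    have h0 : (u ∘ fun t : ℝ => s • Complex.exp (t * Complex.I)) = fun _ => 0 := by
      ext t; exact hbd' t
    rw [h0] at h1
    have h3 := h1.unique (hasDerivAt_const θ (0 : ℝ))
    have e : s • (Complex.exp (θ * Complex.I) * Complex.I)
        = (s * (- Real.sin θ)) • (1 : ℂ) + (s * Real.cos θ) • Complex.I := by
      apply Complex.ext <;> simp [Complex.exp_ofReal_mul_I_re, Complex.exp_ofReal_mul_I_im, -Complex.ofReal_cos, -Complex.ofReal_sin]
    rw [e] at h3
    simp only [map_add, map_smul, smul_eq_mul] at h3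
    linarith

lemma torsion_integral_scale {s : ℝ} (hs : 0 < s) (u : ℂ → ℝ) :
    ∫ z in ball (0 : ℂ) s, ‖gradient u z‖ ^ 2 =
      ∫ w in ball (0 : ℂ) 1, ((s * fderiv ℝ u (s • w) 1) * (s * fderiv ℝ u (s • w) 1)
        + (s * fderiv ℝ u (s • w) Complex.I) * (s * fderiv ℝ u (s • w) Complex.I)) := by
  have h := Measure.setIntegral_comp_smul_of_pos volume (fun z => ‖gradient u z‖ ^ 2)
    (ball (0 : ℂ) 1) hs
  rw [smul_unitBall_of_pos hs, Complex.finrank_real_complex, smul_eq_mul] at h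
  have : ∀ w, ((s * fderiv ℝ u (s • w) 1) * (s * fderiv ℝ u (s • w) 1)
        + (s * fderiv ℝ u (s • w) Complex.I) * (s * fderiv ℝ u (s • w) Complex.I))
      = s ^ 2 * ‖gradient u (s • w)‖ ^ 2 := by
    intro w; rw [norm_gradient_sq]; ring
  simp only [this]
  rw [integral_const_mul, h]
  field_simp

lemma deriv_identity {γ r : ℝ} (hγ0 : 0 ≤ γ) (hγ1 : γ < 1) (hr : 0 < r) {S : Set ℝ}
    (hS : S ∈ 𝓝 r) (V V' : ℝ → ℂ → ℝ)
    (hV : ContinuousOn (fun x : ℝ × ℂ => V x.1 x.2) (S ×ˢ closedBall 0 1))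
    (hV' : ContinuousOn (fun x : ℝ × ℂ => V' x.1 x.2) (S ×ˢ closedBall 0 1))
    (hd : ∀ s ∈ S, ∀ w ∈ ball (0 : ℂ) 1, HasDerivAt (fun t => V t w) (V' s w) s)
    (hpos : ∀ s ∈ S, ∀ w ∈ ball (0 : ℂ) 1, 0 < V s w)
    (hid : ∀ s ∈ S, s ^ 2 * ∫ w in ball (0 : ℂ) 1, V r w * V s w ^ γ
      = r ^ 2 * ∫ w in ball (0 : ℂ) 1, V s w * V r w ^ γ) :
    HasDerivAt (fun s => s ^ 2 * ∫ w in ball (0 : ℂ) 1, V s w ^ (1 + γ))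
      (4 * r / (1 - γ) * ∫ w in ball (0 : ℂ) 1, V r w ^ (1 + γ)) r := by
  obtain ⟨ε, hε, hεS⟩ := Metric.nhds_basis_closedBall.mem_iff.1 hS
  have hK : IsCompact (closedBall r ε ×ˢ closedBall (0 : ℂ) 1) :=
    (isCompact_closedBall r ε).prod (isCompact_closedBall 0 1)
  have hsub : closedBall r ε ×ˢ closedBall (0 : ℂ) 1 ⊆ S ×ˢ closedBall (0 : ℂ) 1 :=
    prod_mono hεS subset_rfl
  obtain ⟨M₁, hM₁⟩ := hK.exists_bound_of_continuousOn (hV.mono hsub)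
  obtain ⟨M₂, hM₂⟩ := hK.exists_bound_of_continuousOn (hV'.mono hsub)
  have hrε : r ∈ closedBall r ε := mem_closedBall_self hε.le
  have hM1 : 0 ≤ M₁ := (norm_nonneg _).trans (hM₁ (r, 0) ⟨hrε, by simp⟩)
  have hM2 : 0 ≤ M₂ := (norm_nonneg _).trans (hM₂ (r, 0) ⟨hrε, by simp⟩)
  have bV : ∀ s ∈ closedBall r ε, ∀ w ∈ ball (0 : ℂ) 1, V s w ≤ M₁ := fun s hs w hw =>
    (le_abs_self _).trans (hM₁ (s, w) ⟨hs, ball_subset_closedBall hw⟩)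
  have bV' : ∀ s ∈ closedBall r ε, ∀ w ∈ ball (0 : ℂ) 1, |V' s w| ≤ M₂ := fun s hs w hw =>
    hM₂ (s, w) ⟨hs, ball_subset_closedBall hw⟩
  have bVγ : ∀ s ∈ closedBall r ε, ∀ w ∈ ball (0 : ℂ) 1, V s w ^ γ ≤ M₁ ^ γ := fun s hs w hw =>
    Real.rpow_le_rpow (hpos s (hεS hs) w hw).le (bV s hs w hw) hγ0
  have cV : ∀ s ∈ closedBall r ε, ContinuousOn (V s) (closedBall 0 1) := fun s hs =>
    hV.comp (f := fun w : ℂ => (s, w)) (by fun_prop) (fun w hw => ⟨hεS hs, hw⟩)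
  have cV' : ∀ s ∈ closedBall r ε, ContinuousOn (V' s) (closedBall 0 1) := fun s hs =>
    hV'.comp (f := fun w : ℂ => (s, w)) (by fun_prop) (fun w hw => ⟨hεS hs, hw⟩)
  have cVγ : ∀ s ∈ closedBall r ε, ContinuousOn (fun w => V s w ^ γ) (closedBall 0 1) :=
    fun s hs => (cV s hs).rpow_const (fun _ _ => Or.inr hγ0)
  have cV1 : ∀ s ∈ closedBall r ε, ContinuousOn (fun w => V s w ^ (1 + γ)) (closedBall 0 1) :=
    fun s hs => (cV s hs).rpow_const (fun _ _ => Or.inr (by positivity))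
  have hnhds : closedBall r ε ∈ 𝓝 r := closedBall_mem_nhds r hε
  have hcint : ∀ c : ℝ, IntegrableOn (fun _ : ℂ => c) (ball 0 1) := fun c =>
    integrable_ball continuousOn_const
  have hball : MeasurableSet (ball (0 : ℂ) 1) := measurableSet_ball
  -- derivative of the integral
  have step1 := (hasDerivAt_integral_of_dominated_loc_of_deriv_le
    (μ := volume.restrict (ball (0 : ℂ) 1)) (F := fun s w => V s w ^ (1 + γ))
    (F' := fun s w => V' s w * (1 + γ) * V s w ^ γ) (bound := fun _ => M₂ * (1 + γ) * M₁ ^ γ)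
    hnhds (Eventually.mono hnhds fun s hs => (integrable_ball (cV1 s hs)).1)
    (integrable_ball (cV1 r hrε))
    (integrable_ball (((cV' r hrε).mul continuousOn_const).mul (cVγ r hrε))).1
    ((ae_restrict_mem hball).mono fun w hw s hs => by
      rw [norm_mul, norm_mul, Real.norm_of_nonneg (by positivity : 0 ≤ 1 + γ),
        Real.norm_of_nonneg (Real.rpow_nonneg (hpos s (hεS hs) w hw).le _), Real.norm_eq_abs]
      have := bV' s hs w hw
      have := bVγ s hs w hw
      have := Real.rpow_nonneg (hpos s (hεS hs) w hw).le γ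
      gcongr)
    (hcint _)
    ((ae_restrict_mem hball).mono fun w hw s hs => by
      have := (hd s (hεS hs) w hw).rpow_const (p := 1 + γ) (Or.inl (hpos s (hεS hs) w hw).ne')
      rwa [add_sub_cancel_left] at this)).2
  -- limit of the difference quotients
  have step2 : Tendsto (fun s => ∫ w in ball (0 : ℂ) 1,
      slope (fun t => V r w * V t w ^ γ - V t w * V r w ^ γ) r s) (𝓝[≠] r)
      (𝓝 (∫ w in ball (0 : ℂ) 1, (γ - 1) * (V' r w * V r w ^ γ))) := by
    refine tendsto_integral_filter_of_dominated_convergence (fun _ => M₁ ^ γ * M₂) ?_ ?_ (hcint _) ?_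
    · filter_upwards [nhdsWithin_le_nhds hnhds] with s hs
      simp only [slope_def_field]
      exact (integrable_ball (ContinuousOn.div_const (((((cV r hrε).mul (cVγ s hs)).sub
        ((cV s hs).mul (cVγ r hrε)))).sub ((((cV r hrε).mul (cVγ r hrε)).sub
        ((cV r hrε).mul (cVγ r hrε))))) _)).1
    · filter_upwards [nhdsWithin_le_nhds hnhds, self_mem_nhdsWithin] with s hs hne
      filter_upwards [ae_restrict_mem hball] with w hw
      have hlip : |V s w - V r w| ≤ M₂ * |s - r| := by
        have := (convex_closedBall r ε).norm_image_sub_le_of_norm_hasDerivWithin_le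
          (f := fun t => V t w) (f' := fun t => V' t w) (C := M₂)
          (fun t ht => (hd t (hεS ht) w hw).hasDerivWithinAt) (fun t ht => bV' t ht w hw) hrε hs
        simpa using this
      have hpr := hpos r (hεS hrε) w hw
      have hps := hpos s (hεS hs) w hw
      have hb : ∀ a b : ℝ, 0 < a → a ≤ b → b ^ γ ≤ M₁ ^ γ →
          |a * b ^ γ - b * a ^ γ| ≤ M₁ ^ γ * |b - a| := by
        intro a b ha hab hbM
        have h1 : a ^ γ ≤ b ^ γ := Real.rpow_le_rpow ha.le hab hγ0
        have h2 : a * b ^ γ ≤ b * a ^ γ := by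
          have hb0 := ha.trans_le hab
          have h3 : a ^ (1 - γ) ≤ b ^ (1 - γ) := Real.rpow_le_rpow ha.le hab (by linarith)
          have e1 : a = a ^ (1 - γ) * a ^ γ := by
            rw [← Real.rpow_add ha]; simp
          have e2 : b = b ^ (1 - γ) * b ^ γ := by
            rw [← Real.rpow_add hb0]; simp
          have : a ^ (1 - γ) * (a ^ γ * b ^ γ) ≤ b ^ (1 - γ) * (a ^ γ * b ^ γ) := by
            have : 0 ≤ a ^ γ * b ^ γ := by positivity
            gcongr
          calc a * b ^ γ = a ^ (1 - γ) * (a ^ γ * b ^ γ) := by rw [← mul_assoc, ← e1]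
            _ ≤ b ^ (1 - γ) * (a ^ γ * b ^ γ) := this
            _ = b * a ^ γ := by rw [mul_comm (a ^ γ), ← mul_assoc, ← e2]
        rw [abs_of_nonpos (by linarith), abs_of_nonneg (by linarith)]
        have hb0 := ha.trans_le hab
        calc -(a * b ^ γ - b * a ^ γ) ≤ b ^ γ * (b - a) := by nlinarith
          _ ≤ M₁ ^ γ * (b - a) := by
            have : 0 ≤ b - a := by linarith
            gcongr
      have hmain : |V r w * V s w ^ γ - V s w * V r w ^ γ| ≤ M₁ ^ γ * |V s w - V r w| := by
        rcases le_total (V r w) (V s w) with hle | hle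
        · exact hb _ _ hpr hle (bVγ s hs w hw)
        · rw [abs_sub_comm, abs_sub_comm (V s w)]
          exact hb _ _ hps hle (bVγ r hrε w hw)
      have hne' : 0 < |s - r| := abs_pos.2 (sub_ne_zero.2 hne)
      rw [slope_def_field, sub_self, sub_zero, norm_div, Real.norm_eq_abs, Real.norm_eq_abs,
        div_le_iff₀ hne']
      calc _ ≤ _ := hmain
        _ ≤ M₁ ^ γ * (M₂ * |s - r|) := by gcongr
        _ = _ := by ring
    · filter_upwards [ae_restrict_mem hball] with w hw
      have hpr := hpos r (hεS hrε) w hw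
      have h1 := hd r (hεS hrε) w hw
      have h2 := ((h1.rpow_const (p := γ) (Or.inl hpr.ne')).const_mul (V r w)).sub
        (h1.mul_const (V r w ^ γ))
      have h3 := hasDerivAt_iff_tendsto_slope.1 h2
      convert! h3 using 2
      have : V r w ^ γ = V r w * V r w ^ (γ - 1) := by
        rw [Real.rpow_sub_one hpr.ne']; field_simp
      rw [this]; ring
  have step3 : Tendsto (fun s => ∫ w in ball (0 : ℂ) 1, V r w * V s w ^ γ) (𝓝[≠] r)
      (𝓝 (∫ w in ball (0 : ℂ) 1, V r w * V r w ^ γ)) := by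
    refine tendsto_integral_filter_of_dominated_convergence (fun _ => M₁ * M₁ ^ γ) ?_ ?_ (hcint _) ?_
    · filter_upwards [nhdsWithin_le_nhds hnhds] with s hs
      exact (integrable_ball ((cV r hrε).mul (cVγ s hs))).1
    · filter_upwards [nhdsWithin_le_nhds hnhds] with s hs
      filter_upwards [ae_restrict_mem hball] with w hw
      have hpr := hpos r (hεS hrε) w hw
      have hps := hpos s (hεS hs) w hw
      rw [Real.norm_of_nonneg (by positivity)]
      have := bV r hrε w hw
      have := bVγ s hs w hw
      gcongr
    · filter_upwards [ae_restrict_mem hball] with w hw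
      have h1 := (hd r (hεS hrε) w hw).continuousAt
      exact ((h1.rpow_const (Or.inr hγ0)).tendsto.const_mul (V r w)).mono_left nhdsWithin_le_nhds
  have e1 : ∫ w in ball (0 : ℂ) 1, V r w * V r w ^ γ = ∫ w in ball (0 : ℂ) 1, V r w ^ (1 + γ) := by
    refine setIntegral_congr_fun hball fun w hw => ?_
    rw [Real.rpow_add (hpos r (hεS hrε) w hw), Real.rpow_one]
  have e2 : ∫ w in ball (0 : ℂ) 1, V' r w * (1 + γ) * V r w ^ γ
      = (1 + γ) * ∫ w in ball (0 : ℂ) 1, V' r w * V r w ^ γ := by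
    rw [← integral_const_mul]; congr 1; ext w; ring
  rw [e2] at step1
  rw [integral_const_mul] at step2
  rw [e1] at step3
  set I := ∫ w in ball (0 : ℂ) 1, V r w ^ (1 + γ) with hI
  set K := ∫ w in ball (0 : ℂ) 1, V' r w * V r w ^ γ with hKdef
  have step4 : r ^ 2 * ((γ - 1) * K) = -((r + r) * I) := by
    refine tendsto_nhds_unique (step2.const_mul (r ^ 2)) ?_
    have h5 : Tendsto (fun s : ℝ => s + r) (𝓝[≠] r) (𝓝 (r + r)) :=
      ((continuous_id.add continuous_const).tendsto r).mono_left nhdsWithin_le_nhds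
    refine ((h5.mul step3).neg).congr' ?_
    filter_upwards [nhdsWithin_le_nhds hnhds, self_mem_nhdsWithin] with s hs hne
    have hne' : s - r ≠ 0 := sub_ne_zero.2 hne
    simp only [slope_def_field, sub_self, sub_zero]
    have i1 : IntegrableOn (fun w => V r w * V s w ^ γ) (ball 0 1) :=
      integrable_ball ((cV r hrε).mul (cVγ s hs))
    have i2 : IntegrableOn (fun w => V s w * V r w ^ γ) (ball 0 1) :=
      integrable_ball ((cV s hs).mul (cVγ r hrε))
    rw [integral_div, integral_sub i1 i2]
    have := hid s (hεS hs)
    field_simp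
    linear_combination -this
  have h6 := (hasDerivAt_pow 2 r).mul step1
  convert! h6 using 1
  have h7 : 1 - γ ≠ 0 := by linarith
  have h8 : r * ((1 - γ) * K) = 2 * I := by
    have := hr.ne'
    apply mul_left_cancel₀ this
    linear_combination - step4
  simp only [← hI]
  field_simp
  push_cast
  linear_combination (-(1 + γ) * r) * h8

end helpers

/-- First variation of the `γ`-torsional rigidity along the family of disks `B(0,r)`,
`0 < r < R ≤ ∞`. -/
theorem torsional_rigidity_derivative_disks
    (γ : ℝ) (hγ0 : 0 ≤ γ) (hγ1 : γ < 1) (R : ℝ≥0∞) (hR : 0 < R)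
    (U : ℝ → ℂ → ℝ)
    (hreg : ContDiffOn ℝ 1 (fun p : ℝ × ℂ => U p.1 p.2)
      {p : ℝ × ℂ | 0 < p.1 ∧ ENNReal.ofReal p.1 < R})
    (htor : ∀ r : ℝ, 0 < r → ENNReal.ofReal r < R →
      IsTorsionFnC γ (Metric.ball (0 : ℂ) r) (U r)) :
    ∀ r : ℝ, 0 < r → ENNReal.ofReal r < R →
      HasDerivAt (fun s : ℝ => ∫ z in Metric.ball (0 : ℂ) s, ‖gradient (U s) z‖ ^ 2)
        (((1 + γ) / (1 - γ)) * r *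
          ∫ θ in (0 : ℝ)..(2 * π), ‖gradient (U r) ((r : ℂ) * Complex.exp (θ * Complex.I))‖ ^ 2)
        r := by
  intro r hr hrR
  set S : Set ℝ := {s | 0 < s ∧ ENNReal.ofReal s < R} with hSdef
  have hSo : IsOpen S :=
    (isOpen_lt continuous_const continuous_id).inter
      (isOpen_lt ENNReal.continuous_ofReal continuous_const)
  have hrS : r ∈ S := ⟨hr, hrR⟩
  set G : ℝ × ℂ → ℝ := fun p => U p.1 p.2 with hG
  have hOo : IsOpen {p : ℝ × ℂ | 0 < p.1 ∧ ENNReal.ofReal p.1 < R} := hSo.preimage continuous_fst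
  have hu : ∀ s ∈ S, ContDiff ℝ 1 (U s) := by
    intro s hs
    have h1 : ContDiffOn ℝ 1 (fun z : ℂ => G (s, z)) Set.univ :=
      hreg.comp (f := fun z : ℂ => (s, z)) (by fun_prop) (fun z _ => hs)
    exact contDiffOn_univ.1 h1
  have hsol : ∀ s ∈ S, _ := fun s hs => torsion_diskSol hγ0 hs.1 (hu s hs) (htor s hs.1 hs.2)
  have hpos : ∀ s ∈ S, ∀ w ∈ Metric.ball (0 : ℂ) 1, 0 < U s (s • w) := by
    intro s hs w hw
    apply (htor s hs.1 hs.2).2.2.2.2.1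
    rw [mem_ball_zero_iff] at hw ⊢
    rw [norm_smul, Real.norm_of_nonneg hs.1.le]
    nlinarith [hs.1]
  have hmaps : Set.MapsTo (fun x : ℝ × ℂ => (x.1, x.1 • x.2)) (S ×ˢ Metric.closedBall 0 1)
      {p : ℝ × ℂ | 0 < p.1 ∧ ENNReal.ofReal p.1 < R} := fun x hx => hx.1
  have hT : ∀ s ∈ S, ∫ z in Metric.ball (0 : ℂ) s, ‖gradient (U s) z‖ ^ 2
      = s ^ 2 * ∫ w in Metric.ball (0 : ℂ) 1, U s (s • w) ^ (1 + γ) := by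
    intro s hs
    rw [torsion_integral_scale hs.1, (hsol s hs).green (hsol s hs), ← integral_const_mul]
    refine setIntegral_congr_fun measurableSet_ball fun w hw => ?_
    rw [Real.rpow_add (hpos s hs w hw), Real.rpow_one]
    ring
  have key := deriv_identity (S := S) hγ0 hγ1 hr (hSo.mem_nhds hrS) (fun s w => U s (s • w))
    (fun s w => fderiv ℝ G (s, s • w) (1, w))
    (hreg.continuousOn.comp (f := fun x : ℝ × ℂ => (x.1, x.1 • x.2)) (by fun_prop) hmaps)
    (((hreg.continuousOn_fderiv_of_isOpen hOo (by norm_num)).comp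
      (f := fun x : ℝ × ℂ => (x.1, x.1 • x.2)) (by fun_prop) hmaps).clm_apply (by fun_prop))
    (by
      intro s hs w hw
      have h1 : HasFDerivAt G (fderiv ℝ G (s, s • w)) (s, s • w) :=
        ((hreg.differentiableOn (by norm_num)).differentiableAt
          (hOo.mem_nhds (x := (s, s • w)) hs)).hasFDerivAt
      have h2 : HasDerivAt (fun t : ℝ => (t, t • w)) (1, w) s := by
        have := (hasDerivAt_id s).prodMk ((hasDerivAt_id s).smul_const w)
        simpa using this
      exact h1.comp_hasDerivAt s h2)
    hpos
    (by
      intro s hs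
      have h1 := (hsol r hrS).green (hsol s hs)
      have h2 := (hsol s hs).green (hsol r hrS)
      rw [← integral_const_mul, ← integral_const_mul]
      calc _ = _ := by
            refine Eq.trans ?_ h1.symm
            congr 1; ext w; ring
        _ = _ := by congr 1; ext w; ring
        _ = _ := h2
        _ = _ := by congr 1; ext w; ring)
  have hpoh := (hsol r hrS).pohozaev hγ0 (c := r ^ 2) (hpos r hrS) (fun z _ => rfl)
  have hper : ∫ θ in (-π)..π, ((r * fderiv ℝ (U r) (r • Complex.exp (θ * Complex.I)) 1) ^ 2
      + (r * fderiv ℝ (U r) (r • Complex.exp (θ * Complex.I)) Complex.I) ^ 2)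
      = r ^ 2 * ∫ θ in (0 : ℝ)..(2 * π),
        ‖gradient (U r) ((r : ℂ) * Complex.exp (θ * Complex.I))‖ ^ 2 := by
    rw [← intervalIntegral.integral_const_mul]
    have hp : Function.Periodic (fun θ : ℝ => r ^ 2 *
        ‖gradient (U r) ((r : ℂ) * Complex.exp (θ * Complex.I))‖ ^ 2) (2 * π) := by
      intro θ
      simp only
      have : Complex.exp (((θ + 2 * π : ℝ) : ℂ) * Complex.I) = Complex.exp (θ * Complex.I) := by
        push_cast
        rw [add_mul, Complex.exp_add, Complex.exp_two_pi_mul_I, mul_one]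
      rw [this]
    have h := hp.intervalIntegral_add_eq (-π) 0
    rw [show -π + 2 * π = π by ring, zero_add] at h
    rw [← h]
    congr 1
    ext θ
    rw [norm_gradient_sq, Complex.real_smul]
    ring
  rw [hper] at hpoh
  refine HasDerivAt.congr_of_eventuallyEq ?_
    (Filter.eventuallyEq_of_mem (hSo.mem_nhds hrS) hT)
  convert! key using 1
  generalize (∫ θ in (0 : ℝ)..(2 * π),
        ‖gradient (U r) ((r : ℂ) * Complex.exp (θ * Complex.I))‖ ^ 2) = K at *
  have h9 : ∫ w in Metric.ball (0 : ℂ) 1, U r (r • w) ^ (1 + γ) = (1 + γ) / 4 * K := by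
    apply mul_left_cancel₀ (pow_ne_zero 2 hr.ne')
    rw [hpoh]; ring
  simp only [h9]
  have h7 : 1 - γ ≠ 0 := by linarith
  field_simp
end

section
/- Let O ⊆ ℝ² be a nonempty bounded, simply connected open set with C^∞ smooth boundary, let λ > 0, and let u : ℝ² → ℝ be continuous on the closure of O, continuously differentiable up to the boundary, twice continuously differentiable in O, with Δu = −λu and u > 0 in O and u = 0 on ∂O. Then ∫_O u² dA ≤ (λ/(4π)) · (∫_O u dA)². (This is the Euclidean case τ = 4π of the eigenfunction inequality (2.6) in Remark 2.2(ii).) -/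
open MeasureTheory Real

lemma pr_inv (M : ℝ) (hM : 0 < M) : ∃ Θ : ℝ → ℝ, Continuous Θ ∧
    (∀ s, 0 < s → s < M → 0 < sin (Θ s) ∧
      HasDerivAt Θ ((M / π * (2 * sin (Θ s) ^ 2))⁻¹) s) := by
  have hpi := Real.pi_pos
  let A : ℝ → ℝ := fun t => M / π * (t - sin t * cos t)
  have hAc : Continuous A := by fun_prop
  have hAd : ∀ t, HasDerivAt A (M / π * (2 * sin t ^ 2)) t := by
    intro t
    have h := ((hasDerivAt_id t).sub ((hasDerivAt_sin t).mul (hasDerivAt_cos t))).const_mul (M / π)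
    refine h.congr_deriv ?_
    have := sin_sq_add_cos_sq t
    congr 1
    nlinarith
  have hmono : StrictMono A := by
    intro a b hab
    have h1 : sin b * cos b - sin a * cos a = sin (b - a) * cos (b + a) := by
      rw [sin_sub, cos_add]
      have ha := sin_sq_add_cos_sq a
      have hb := sin_sq_add_cos_sq b
      linear_combination (sin a * cos a) * hb - (sin b * cos b) * ha
    have h2 : |sin (b - a)| < b - a := by
      have := abs_sin_lt_abs (x := b - a) (sub_pos.2 hab).ne'
      rwa [abs_of_pos (sub_pos.2 hab)] at this
    have h3 : sin (b - a) * cos (b + a) < b - a := by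
      calc _ ≤ |sin (b - a) * cos (b + a)| := le_abs_self _
        _ = |sin (b - a)| * |cos (b + a)| := abs_mul _ _
        _ ≤ |sin (b - a)| * 1 := by gcongr; exact abs_cos_le_one _
        _ < b - a := by linarith
    have : 0 < M / π := by positivity
    show M / π * _ < M / π * _
    gcongr 1
    linarith
  have hsurj : Function.Surjective A := by
    have hb : ∀ t, |sin t * cos t| ≤ 1 := fun t => by
      rw [abs_mul]; exact mul_le_one₀ (abs_sin_le_one _) (abs_nonneg _) (abs_cos_le_one _)
    have hpos : 0 < M / π := by positivity
    apply hAc.surjective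
    · apply Filter.Tendsto.const_mul_atTop hpos
      refine Filter.tendsto_atTop_mono (f := fun t : ℝ => t - 1) (fun t => ?_) ?_
      · have := abs_le.1 (hb t); linarith
      · exact Filter.tendsto_atTop_add_const_right _ _ Filter.tendsto_id
    · apply Filter.Tendsto.const_mul_atBot hpos
      refine Filter.tendsto_atBot_mono (f := fun t : ℝ => t + 1) (fun t => ?_) ?_
      · have := abs_le.1 (hb t); linarith
      · exact Filter.tendsto_atBot_add_const_right _ _ Filter.tendsto_id
  let e := hmono.orderIsoOfSurjective A hsurj
  have heA : ∀ s, A (e.symm s) = s := fun s => e.apply_symm_apply s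
  refine ⟨e.symm, e.symm.continuous, fun s hs0 hsM => ?_⟩
  have h0 : 0 < e.symm s := by
    rw [← hmono.lt_iff_lt, heA]; simpa [A] using hs0
  have h1 : e.symm s < π := by
    rw [← hmono.lt_iff_lt, heA]; simpa [A, hpi.ne'] using hsM
  have h2 := sin_pos_of_pos_of_lt_pi h0 h1
  refine ⟨h2, ?_⟩
  apply HasDerivAt.of_local_left_inverse e.symm.continuous.continuousAt (hAd _) (by positivity)
  exact Filter.Eventually.of_forall heA

lemma pr_mul_zero (f g : ℝ → ℝ) (f' x : ℝ) (hf : HasDerivAt f f' x) (h0 : f x = 0)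
    (hg : ContinuousAt g x) : HasDerivAt (fun t => f t * g t) (f' * g x) x := by
  rw [hasDerivAt_iff_tendsto_slope] at *
  have : slope (fun t => f t * g t) x = fun t => slope f x t * g t := by
    ext t; simp [slope, h0, mul_assoc]
  rw [this]
  exact hf.mul (hg.tendsto.mono_left nhdsWithin_le_nhds)

lemma pr_param (F p : ℝ → ℝ → ℝ) (R : ℝ) 
    (hF : Continuous (Function.uncurry F)) (hp : Continuous (Function.uncurry p))
    (hFp : ∀ x y, HasDerivAt (fun x => F x y) (p x y) x) (x : ℝ) :
    HasDerivAt (fun x => ∫ y in (-R)..R, F x y) (∫ y in (-R)..R, p x y) x := by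
  obtain ⟨C, hC⟩ := ((isCompact_Icc (a := x - 1) (b := x + 1)).prod
    (isCompact_uIcc (a := -R) (b := R))).exists_bound_of_continuousOn (f := Function.uncurry p)
      hp.continuousOn
  refine (intervalIntegral.hasDerivAt_integral_of_dominated_loc_of_deriv_le
    (s := Set.Icc (x - 1) (x + 1)) (bound := fun _ => C) (Icc_mem_nhds (by linarith) (by linarith))
    ?_ ?_ ?_ ?_ ?_ ?_).2
  · exact Filter.Eventually.of_forall fun z => 
      (hF.comp (Continuous.prodMk_right z)).aestronglyMeasurable
  · exact (hF.comp (Continuous.prodMk_right x)).intervalIntegrable _ _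
  · exact (hp.comp (Continuous.prodMk_right x)).aestronglyMeasurable
  · exact Filter.Eventually.of_forall fun t ht z hz => hC (z, t) ⟨hz, Set.uIoc_subset_uIcc ht⟩
  · exact intervalIntegrable_const
  · exact Filter.Eventually.of_forall fun t ht z hz => hFp z t

set_option maxHeartbeats 1000000 in
lemma pr_sobolev (F p q : ℝ → ℝ → ℝ) (R : ℝ) (hR : 0 < R)
    (hF : Continuous (Function.uncurry F)) (hp : Continuous (Function.uncurry p))
    (hq : Continuous (Function.uncurry q))
    (hFp : ∀ x y, HasDerivAt (fun x => F x y) (p x y) x)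
    (hFq : ∀ x y, HasDerivAt (fun y => F x y) (q x y) y)
    (h0 : ∀ x y, 0 ≤ F x y)
    (hsx : ∀ x y, R ≤ |x| → F x y = 0) (hsy : ∀ x y, R ≤ |y| → F x y = 0) :
    4 * π * ∫ x in (-R)..R, ∫ y in (-R)..R, F x y ^ 2 ≤
      (∫ x in (-R)..R, ∫ y in (-R)..R, √(p x y ^ 2 + q x y ^ 2)) ^ 2 := by
  have hRR : -R ≤ R := by linarith
  have hpi := Real.pi_pos
  set m : ℝ → ℝ := fun x => ∫ y in (-R)..R, F x y ^ 2 with hm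
  set D : ℝ → ℝ := fun x => ∫ y in (-R)..R, √(p x y ^ 2 + q x y ^ 2) with hD
  set N : ℝ → ℝ := fun x => ∫ y in (-R)..R, F x y with hN
  set P : ℝ → ℝ := fun x => ∫ y in (-R)..R, p x y with hP
  have hmc : Continuous m := 
    intervalIntegral.continuous_parametric_intervalIntegral_of_continuous'
      (f := fun x y => F x y ^ 2) (by simp only [Function.uncurry_def] at hF ⊢; fun_prop) _ _
  have hDc : Continuous D := 
    intervalIntegral.continuous_parametric_intervalIntegral_of_continuous'
      (f := fun x y => √(p x y ^ 2 + q x y ^ 2)) (by simp only [Function.uncurry_def] at hp hq ⊢; fun_prop) _ _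
  have hFx : ∀ x, Continuous (F x) := fun x => hF.comp (Continuous.prodMk_right x)
  have hpx : ∀ x, Continuous (p x) := fun x => hp.comp (Continuous.prodMk_right x)
  have hqx : ∀ x, Continuous (q x) := fun x => hq.comp (Continuous.prodMk_right x)
  have hNd : ∀ x, HasDerivAt N (P x) x := pr_param F p R hF hp hFp
  have hm0 : ∀ x, 0 ≤ m x := fun x =>
    intervalIntegral.integral_nonneg hRR (fun y _ => sq_nonneg _)
  set M := ∫ x in (-R)..R, m x with hMdef
  have hM0 : 0 ≤ M := intervalIntegral.integral_nonneg hRR (fun y _ => hm0 _)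
  rcases hM0.eq_or_lt with hM | hM
  · rw [← hM, mul_zero]; positivity
  obtain ⟨Θ, hΘc, hΘ⟩ := pr_inv M hM
  set I : ℝ → ℝ := fun x => ∫ t in (-R)..x, m t with hI
  have hId : ∀ x, HasDerivAt I (m x) x := fun x =>
    intervalIntegral.integral_hasDerivAt_right (hmc.intervalIntegrable _ _)
      (hmc.stronglyMeasurableAtFilter _ _) hmc.continuousAt
  have hImono : Monotone I := monotone_of_deriv_nonneg (fun x => (hId x).differentiableAt)
    (fun x => by rw [(hId x).deriv]; exact hm0 x)
  have hIc : Continuous I := continuous_iff_continuousAt.2 fun x => (hId x).continuousAt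
  have hIL : I (-R) = 0 := by simp [hI]
  have hIR : I R = M := rfl
  set c := 2 * √(π / M) with hc
  have hkey : ∀ x ∈ Set.Ioo (-R) R, ∃ d, HasDerivAt (fun x => N x * (-cos (Θ (I x)))) d x ∧
      c * m x - D x ≤ d := by
    intro x hx
    rcases (hm0 x).eq_or_lt with hmx | hmx
    · -- slice vanishes
      have hFz : ∀ y ∈ Set.Icc (-R) R, F x y = 0 := by
        have := (intervalIntegral.integral_eq_zero_iff_of_le_of_nonneg_ae hRR
          (f := fun y => F x y ^ 2) (Filter.Eventually.of_forall fun y => sq_nonneg _)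
          (((hFx x).pow 2).intervalIntegrable _ _)).1 hmx.symm
        have h2 := Measure.eqOn_Icc_of_ae_eq (μ := volume) (a := -R) (b := R) (by linarith)
          (f := fun y => F x y ^ 2) (g := fun _ => 0) (by 
            rw [restrict_Ioc_eq_restrict_Icc] at this; exact this) ((hFx x).pow 2).continuousOn continuousOn_const
        intro y hy
        have := h2 hy
        simpa using this
      have hNx : N x = 0 := by
        rw [hN]
        simp only
        rw [intervalIntegral.integral_congr (g := fun _ => (0:ℝ))]
        · simp
        · intro y hy
          rw [Set.uIcc_of_le hRR] at hy
          exact hFz y hy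
      refine ⟨_, pr_mul_zero N (fun x => -cos (Θ (I x))) (P x) x (hNd x) hNx
        (by fun_prop), ?_⟩
      rw [← hmx, mul_zero, zero_sub]
      have h1 : |P x| ≤ D x := by
        calc |P x| ≤ ∫ y in (-R)..R, |p x y| := intervalIntegral.abs_integral_le_integral_abs hRR
          _ ≤ D x := by
            apply intervalIntegral.integral_mono_on hRR
            · exact (hpx x).abs.intervalIntegrable _ _
            · exact ((((hpx x).pow 2).add ((hqx x).pow 2)).sqrt).intervalIntegrable _ _
            · intro y _
              exact Real.abs_le_sqrt (by nlinarith [sq_nonneg (q x y)])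
      have h2 : |P x * -cos (Θ (I x))| ≤ |P x| := by
        rw [abs_mul, abs_neg]
        exact mul_le_of_le_one_right (abs_nonneg _) (abs_cos_le_one _)
      linarith [(abs_le.1 (h2.trans h1)).1]
    · have hI0 : 0 < I x := by
        by_contra hcon
        have hmin : IsLocalMin I x := by
          filter_upwards [Ioo_mem_nhds hx.1 hx.2] with z hz
          have := hImono hz.1.le
          linarith
        have := hmin.hasDerivAt_eq_zero (hId x)
        linarith
      have hI1 : I x < M := by
        by_contra hcon
        have hmin : IsLocalMax I x := by
          filter_upwards [Ioo_mem_nhds hx.1 hx.2] with z hz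
          have := hImono hz.2.le
          linarith
        have := hmin.hasDerivAt_eq_zero (hId x)
        linarith
      obtain ⟨hs, hΘd⟩ := hΘ (I x) hI0 hI1
      set θ := Θ (I x) with hθ
      set s := sin θ with hsdef
      set h' := π * m x / (2 * M * s) with hh'
      have hcd : HasDerivAt (fun x => -cos (Θ (I x))) h' x := by
        have h1 : HasDerivAt (fun x => Θ (I x)) ((M / π * (2 * s ^ 2))⁻¹ * m x) x := 
          HasDerivAt.comp (h₂ := Θ) x hΘd (hId x)
        refine (h1.cos.neg).congr_deriv ?_
        rw [hh', ← hθ, ← hsdef]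
        field_simp
      refine ⟨_, (hNd x).mul hcd, ?_⟩
      set J : ℝ → ℝ := fun y => ∫ t in (-R)..y, F x t ^ 2 with hJ
      have hJd : ∀ y, HasDerivAt J (F x y ^ 2) y := fun y =>
        intervalIntegral.integral_hasDerivAt_right (((hFx x).pow 2).intervalIntegrable _ _)
          (((hFx x).pow 2).stronglyMeasurableAtFilter _ _) ((hFx x).pow 2).continuousAt
      have hJc : Continuous J := continuous_iff_continuousAt.2 fun x => (hJd x).continuousAt
      have hJmono : Monotone J := monotone_of_deriv_nonneg (fun x => (hJd x).differentiableAt)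
        (fun y => by rw [(hJd y).deriv]; exact sq_nonneg _)
      have hJL : J (-R) = 0 := by simp [hJ]
      have hJR : J R = m x := rfl
      set k : ℝ → ℝ := fun y => s * (2 * J y / m x - 1) with hk
      have hkd : ∀ y, HasDerivAt k (s * (2 * F x y ^ 2 / m x)) y := fun y =>
        ((((hJd y).const_mul 2).div_const (m x)).sub_const 1).const_mul s
      have hkc : Continuous k := by fun_prop
      have hint : ∫ y in (-R)..R, (q x y * k y + F x y * (s * (2 * F x y ^ 2 / m x))) = 0 := by
        rw [intervalIntegral.integral_eq_sub_of_hasDerivAt (f := fun y => F x y * k y)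
          (fun y _ => (hFq x y).mul (hkd y))]
        · rw [hsy x R (le_abs_self _), hsy x (-R) (by rw [abs_neg]; exact le_abs_self _)]; simp
        · apply Continuous.intervalIntegrable
          have := hFx x
          have := hqx x
          fun_prop
      have hpt : ∀ y ∈ Set.Icc (-R) R, c * F x y ^ 2 - √(p x y ^ 2 + q x y ^ 2) - 
          p x y * (-cos θ) - F x y * h' ≤ q x y * k y + F x y * (s * (2 * F x y ^ 2 / m x)) := by
        intro y hy
        have hJ0 : 0 ≤ J y := hJL ▸ hJmono hy.1
        have hJ1 : J y ≤ m x := hJR ▸ hJmono hy.2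
        have hr0 : 0 ≤ J y / m x := by positivity
        have hr1 : J y / m x ≤ 1 := (div_le_one hmx).2 hJ1
        have hk2 : k y ^ 2 ≤ s ^ 2 := by
          have : k y = s * (2 * (J y / m x) - 1) := by rw [hk]; ring
          rw [this, mul_pow]
          apply mul_le_of_le_one_right (sq_nonneg _)
          nlinarith
        have hsc : s ^ 2 + cos θ ^ 2 = 1 := sin_sq_add_cos_sq θ
        have hcs : -√(p x y ^ 2 + q x y ^ 2) ≤ p x y * (-cos θ) + q x y * k y := by
          have : |p x y * (-cos θ) + q x y * k y| ≤ √(p x y ^ 2 + q x y ^ 2) := by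
            apply Real.abs_le_sqrt
            have h1 : (-cos θ) ^ 2 + k y ^ 2 ≤ 1 := by nlinarith
            nlinarith [sq_nonneg (p x y * k y - q x y * (-cos θ)), sq_nonneg (p x y), sq_nonneg (q x y),
              mul_nonneg (add_nonneg (sq_nonneg (p x y)) (sq_nonneg (q x y))) (sub_nonneg.2 h1)]
          exact (abs_le.1 this).1
        have ham : c * F x y ≤ h' + s * (2 * F x y ^ 2 / m x) := by
          have ha : 0 < h' := by positivity
          have hb : 0 ≤ s * (2 * F x y ^ 2 / m x) := by positivity
          apply le_of_sq_le_sq _ (by positivity)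
          have h1 : (c * F x y) ^ 2 = 4 * (h' * (s * (2 * F x y ^ 2 / m x))) := by
            rw [hc, mul_pow, mul_pow, Real.sq_sqrt (by positivity), hh']
            field_simp
            try ring
          rw [h1]
          nlinarith [sq_nonneg (h' - s * (2 * F x y ^ 2 / m x))]
        nlinarith [mul_le_mul_of_nonneg_left ham (h0 x y)]
      have hfin := intervalIntegral.integral_mono_on (μ := volume) hRR 
        (Continuous.intervalIntegrable (by 
          have := hFx x
          have := hqx x
          have := hpx x
          fun_prop) _ _) (Continuous.intervalIntegrable (by 
          have := hFx x
          have := hqx x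
          fun_prop) _ _) hpt
      rw [hint] at hfin
      have i1 : IntervalIntegrable (fun y => c * F x y ^ 2) volume (-R) R :=
        (((hFx x).pow 2).const_mul c).intervalIntegrable _ _
      have i2 : IntervalIntegrable (fun y => √(p x y ^ 2 + q x y ^ 2)) volume (-R) R :=
        ((((hpx x).pow 2).add ((hqx x).pow 2)).sqrt).intervalIntegrable _ _
      have i3 : IntervalIntegrable (fun y => p x y * (-cos θ)) volume (-R) R :=
        ((hpx x).mul_const _).intervalIntegrable _ _
      have i4 : IntervalIntegrable (fun y => F x y * h') volume (-R) R :=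
        ((hFx x).mul_const _).intervalIntegrable _ _
      rw [intervalIntegral.integral_sub ((i1.sub i2).sub i3) i4,
        intervalIntegral.integral_sub (i1.sub i2) i3, intervalIntegral.integral_sub i1 i2,
        intervalIntegral.integral_const_mul, intervalIntegral.integral_mul_const,
        intervalIntegral.integral_mul_const] at hfin
      change c * m x - D x - P x * (-cos θ) - N x * h' ≤ 0 at hfin
      linarith
  choose! d hd using hkey
  have hNz : ∀ x, R ≤ |x| → N x = 0 := fun x hx => by
    simp [hN, hsx x _ hx]
  have hNc : Continuous N := continuous_iff_continuousAt.2 fun x => (hNd x).continuousAt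
  have hfin := intervalIntegral.integral_le_sub_of_hasDeriv_right_of_le (g' := d)
    (φ := fun x => c * m x - D x) hRR
    (g := fun x => N x * (-cos (Θ (I x)))) (by fun_prop)
    (fun x hx => (hd x hx).1.hasDerivWithinAt) 
    ((by fun_prop : Continuous fun x => c * m x - D x).integrableOn_Icc) (fun x hx => (hd x hx).2)
  rw [hNz R (le_abs_self _), hNz (-R) (by rw [abs_neg]; exact le_abs_self _),
    intervalIntegral.integral_sub ((hmc.const_mul c).intervalIntegrable _ _)
      (hDc.intervalIntegrable _ _), intervalIntegral.integral_const_mul] at hfin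
  have hfin2 : c * M ≤ ∫ x in (-R)..R, D x := by linarith
  have hc2 : (c * M) ^ 2 = 4 * π * M := by
    rw [hc, mul_pow, mul_pow, Real.sq_sqrt (by positivity)]
    field_simp
    try ring
  rw [← hc2]
  exact pow_le_pow_left₀ (by positivity) hfin2 2

lemma pr_transfer (G : EuclideanSpace ℝ (Fin 2) → ℝ) (hG : Continuous G) (R : ℝ) (hR : 0 < R)
    (hz : ∀ x, R ≤ ‖x‖ → G x = 0) :
    ∫ x, G x = ∫ x in (-R)..R, ∫ y in (-R)..R, G !₂[x, y] := by
  have hRR : -R ≤ R := by linarith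
  have h1 : ∫ x, G x = ∫ z : ℝ × ℝ, G !₂[z.1, z.2] := by
    rw [← (PiLp.volume_preserving_toLp (Fin 2)).integral_comp
      (MeasurableEquiv.toLp 2 (Fin 2 → ℝ)).measurableEmbedding,
      ← ((volume_preserving_finTwoArrow ℝ).symm).integral_comp
        (MeasurableEquiv.finTwoArrow (α := ℝ)).symm.measurableEmbedding]
    rfl
  have hcont : Continuous fun z : ℝ × ℝ => G !₂[z.1, z.2] := by
    apply hG.comp
    apply (PiLp.continuous_toLp 2 _).comp
    apply continuous_pi
    intro i
    fin_cases i
    · exact continuous_fst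
    · exact continuous_snd
  have hn0 : ∀ x y : ℝ, |x| ≤ ‖(!₂[x, y] : EuclideanSpace ℝ (Fin 2))‖ := fun x y => by
    simpa using PiLp.norm_apply_le (!₂[x, y] : EuclideanSpace ℝ (Fin 2)) 0
  have hn1 : ∀ x y : ℝ, |y| ≤ ‖(!₂[x, y] : EuclideanSpace ℝ (Fin 2))‖ := fun x y => by
    simpa using PiLp.norm_apply_le (!₂[x, y] : EuclideanSpace ℝ (Fin 2)) 1
  have hzx : ∀ x y : ℝ, R ≤ |x| → G !₂[x, y] = 0 := fun x y h => hz _ (h.trans (hn0 x y))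
  have hzy : ∀ x y : ℝ, R ≤ |y| → G !₂[x, y] = 0 := fun x y h => hz _ (h.trans (hn1 x y))
  have habs : ∀ x : ℝ, x ∉ Set.Ioc (-R) R → R ≤ |x| := by
    intro x hx
    by_contra hcon
    push Not at hcon
    exact hx ⟨(abs_lt.1 hcon).1, (abs_lt.1 hcon).2.le⟩
  have hint : Integrable (fun z : ℝ × ℝ => G !₂[z.1, z.2]) (volume.prod volume) := by
    apply hcont.integrable_of_hasCompactSupport
    apply HasCompactSupport.intro ((isCompact_Icc (a := -R) (b := R)).prod
      (isCompact_Icc (a := -R) (b := R)))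
    intro z hzz
    by_cases h : R ≤ |z.1|
    · exact hzx _ _ h
    · by_cases h' : R ≤ |z.2|
      · exact hzy _ _ h'
      · push Not at h h'
        exact absurd ⟨⟨(abs_lt.1 h).1.le, (abs_lt.1 h).2.le⟩, ⟨(abs_lt.1 h').1.le, (abs_lt.1 h').2.le⟩⟩ hzz
  rw [h1, Measure.volume_eq_prod, integral_prod _ hint, intervalIntegral.integral_of_le hRR,
    ← setIntegral_eq_integral_of_forall_compl_eq_zero (s := Set.Ioc (-R) R)]
  · congr 1
    ext x
    rw [intervalIntegral.integral_of_le hRR, setIntegral_eq_integral_of_forall_compl_eq_zero]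
    intro y hy
    exact hzy x y (habs y hy)
  · intro x hx
    simp [hzx x _ (habs x hx)]

lemma pr_sobolev_E (f : EuclideanSpace ℝ (Fin 2) → ℝ) (hf : ContDiff ℝ 1 f)
    (hc : HasCompactSupport f) (h0 : ∀ x, 0 ≤ f x) :
    4 * π * ∫ x, f x ^ 2 ≤ (∫ x, √(fderiv ℝ f x (EuclideanSpace.single 0 1) ^ 2 +
      fderiv ℝ f x (EuclideanSpace.single 1 1) ^ 2)) ^ 2 := by
  obtain ⟨R, hR, hball⟩ := hc.isCompact.isBounded.subset_ball_lt 0 0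
  have hout : ∀ x, R ≤ ‖x‖ → x ∉ tsupport f := fun x hx hxt => by
    have := hball hxt
    rw [mem_ball_zero_iff] at this
    linarith
  have hfz : ∀ x, R ≤ ‖x‖ → f x = 0 := fun x hx => image_eq_zero_of_notMem_tsupport (hout x hx)
  have hdz : ∀ x, R ≤ ‖x‖ → fderiv ℝ f x = 0 := fun x hx => by
    apply image_eq_zero_of_notMem_tsupport
    exact fun h => hout x hx (tsupport_fderiv_subset ℝ h)
  have hfd : Continuous (fderiv ℝ f) := hf.continuous_fderiv one_ne_zero
  have hd0 : Continuous fun x => fderiv ℝ f x (EuclideanSpace.single 0 1) := hfd.clm_apply continuous_const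
  have hd1 : Continuous fun x => fderiv ℝ f x (EuclideanSpace.single 1 1) := hfd.clm_apply continuous_const
  have hfc := hf.continuous
  rw [pr_transfer (fun x => f x ^ 2) (by fun_prop) R hR (fun x hx => by simp [hfz x hx]),
    pr_transfer (fun x => √(fderiv ℝ f x (EuclideanSpace.single 0 1) ^ 2 +
      fderiv ℝ f x (EuclideanSpace.single 1 1) ^ 2)) (by fun_prop) R hR
      (fun x hx => by simp [hdz x hx])]
  have hcont : Continuous fun z : ℝ × ℝ => (!₂[z.1, z.2] : EuclideanSpace ℝ (Fin 2)) := by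
    apply (PiLp.continuous_toLp 2 _).comp
    apply continuous_pi
    intro i
    fin_cases i
    · exact continuous_fst
    · exact continuous_snd
  have hn0 : ∀ x y : ℝ, |x| ≤ ‖(!₂[x, y] : EuclideanSpace ℝ (Fin 2))‖ := fun x y => by
    simpa using PiLp.norm_apply_le (!₂[x, y] : EuclideanSpace ℝ (Fin 2)) 0
  have hn1 : ∀ x y : ℝ, |y| ≤ ‖(!₂[x, y] : EuclideanSpace ℝ (Fin 2))‖ := fun x y => by
    simpa using PiLp.norm_apply_le (!₂[x, y] : EuclideanSpace ℝ (Fin 2)) 1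
  refine pr_sobolev (fun x y => f !₂[x, y])
    (fun x y => fderiv ℝ f !₂[x, y] (EuclideanSpace.single 0 1))
    (fun x y => fderiv ℝ f !₂[x, y] (EuclideanSpace.single 1 1)) R hR
    (hfc.comp hcont) (hd0.comp hcont) (hd1.comp hcont) ?_ ?_ (fun x y => h0 _)
    (fun x y h => hfz _ (h.trans (hn0 x y))) (fun x y h => hfz _ (h.trans (hn1 x y)))
  · intro x y
    have h1 : HasDerivAt (fun x : ℝ => (!₂[x, y] : EuclideanSpace ℝ (Fin 2)))
        (EuclideanSpace.single 0 1) x := by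
      have : (fun x : ℝ => (!₂[x, y] : EuclideanSpace ℝ (Fin 2))) = fun x : ℝ =>
          x • (EuclideanSpace.single 0 1) + !₂[0, y] := by
        ext x i
        fin_cases i <;> simp
      rw [this]
      simpa using ((hasDerivAt_id x).smul_const (EuclideanSpace.single (0 : Fin 2) (1 : ℝ))).add_const
        (!₂[0, y] : EuclideanSpace ℝ (Fin 2))
    exact ((hf.differentiable one_ne_zero _).hasFDerivAt).comp_hasDerivAt x h1
  · intro x y
    have h1 : HasDerivAt (fun y : ℝ => (!₂[x, y] : EuclideanSpace ℝ (Fin 2)))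
        (EuclideanSpace.single 1 1) y := by
      have : (fun y : ℝ => (!₂[x, y] : EuclideanSpace ℝ (Fin 2))) = fun y : ℝ =>
          y • (EuclideanSpace.single 1 1) + !₂[x, 0] := by
        ext y i
        fin_cases i <;> simp
      rw [this]
      simpa using ((hasDerivAt_id y).smul_const (EuclideanSpace.single (1 : Fin 2) (1 : ℝ))).add_const
        (!₂[x, 0] : EuclideanSpace ℝ (Fin 2))
    exact ((hf.differentiable one_ne_zero _).hasFDerivAt).comp_hasDerivAt y h1

lemma pr_cont_mul (O : Set (EuclideanSpace ℝ (Fin 2))) (hO : IsOpen O)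
    (φ ψ : EuclideanSpace ℝ (Fin 2) → ℝ) (hφ : Continuous φ) (hψ : ContinuousOn ψ O)
    (hs : tsupport φ ⊆ O) (hc : HasCompactSupport φ) :
    Continuous (fun x => φ x * ψ x) ∧ Integrable (fun x => φ x * ψ x) := by
  have h1 : Continuous (fun x => φ x * ψ x) := by
    apply continuous_of_tsupport
    intro x hx
    have hxO : x ∈ O := hs (tsupport_mul_subset_left hx)
    exact hφ.continuousAt.mul (hψ.continuousAt (hO.mem_nhds hxO))
  exact ⟨h1, h1.integrable_of_hasCompactSupport hc.mul_right⟩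

lemma pr_level (O : Set (EuclideanSpace ℝ (Fin 2))) (hO : IsOpen O) (lam : ℝ)
    (U : EuclideanSpace ℝ (Fin 2) → ℝ) (hUc : Continuous U) (hcs : HasCompactSupport U)
    (h0 : ∀ x, x ∉ O → U x = 0) (hC2 : ContDiffOn ℝ 2 U O)
    (hpde : ∀ x ∈ O, lap U x = -(lam * U x))
    (g : ℝ → ℝ) (hg : ContDiff ℝ 1 g) (hgm : Monotone g) (t : ℝ) (ht : 0 < t)
    (hgz : ∀ s, s ≤ t → g s = 0) (hg0 : ∀ s, 0 ≤ g s) :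
    4 * π * ∫ x, g (U x) ^ 2 ≤ lam * (∫ x, g (U x) * U x) * ∫ x, deriv g (U x) := by
  have hgd : ∀ s, s < t → deriv g s = 0 := by
    intro s hs
    have : g =ᶠ[nhds s] fun _ => 0 := by
      filter_upwards [Iio_mem_nhds hs] with z hz using hgz z (le_of_lt hz)
    rw [this.deriv_eq]; simp
  have hg'c : Continuous (deriv g) := hg.continuous_deriv le_rfl
  set f : EuclideanSpace ℝ (Fin 2) → ℝ := fun x => g (U x) with hf
  set w : EuclideanSpace ℝ (Fin 2) → ℝ := fun x => deriv g (U x) with hw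
  have hw0 : ∀ x, 0 ≤ w x := fun x => hgm.deriv_nonneg
  have hwc : Continuous w := hg'c.comp hUc
  have hKcl : IsClosed {x | t ≤ U x} := isClosed_le continuous_const hUc
  have hKO : {x | t ≤ U x} ⊆ O := by
    intro x hx
    by_contra hxO
    have := h0 x hxO
    simp only [Set.mem_ofPred_eq] at hx
    linarith
  have hfts : tsupport f ⊆ O := by
    refine (closure_minimal ?_ hKcl).trans hKO
    intro x hx
    by_contra hcon
    simp only [Set.mem_ofPred_eq, not_le] at hcon
    exact hx (hgz _ hcon.le)
  have hwts : tsupport w ⊆ O := by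
    refine (closure_minimal ?_ hKcl).trans hKO
    intro x hx
    by_contra hcon
    simp only [Set.mem_ofPred_eq, not_le] at hcon
    exact hx (hgd _ hcon)
  have hfcs : HasCompactSupport f := hcs.comp_left (g := g) (hgz 0 ht.le)
  have hwcs : HasCompactSupport w := hcs.comp_left (g := deriv g) (hgd 0 ht)
  have hU2 : ∀ x ∈ O, ContDiffAt ℝ 2 U x := fun x hx => hC2.contDiffAt (hO.mem_nhds hx)
  have hU1 : ∀ x ∈ O, DifferentiableAt ℝ U x := fun x hx => (hU2 x hx).differentiableAt (by norm_num)
  have hfev : ∀ x, x ∉ O → f =ᶠ[nhds x] fun _ => 0 := by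
    intro x hx
    have : U x < t := by rw [h0 x hx]; exact ht
    filter_upwards [hUc.continuousAt.eventually_lt_const this] with z hz using hgz _ hz.le
  have hfC : ContDiff ℝ 1 f := by
    rw [contDiff_iff_contDiffAt]
    intro x
    by_cases hx : x ∈ O
    · exact hg.contDiffAt.comp x ((hU2 x hx).of_le (by norm_num))
    · exact contDiffAt_const.congr_of_eventuallyEq (hfev x hx)
  have hfd : ∀ x v, fderiv ℝ f x v = w x * fderiv ℝ U x v := by
    intro x v
    by_cases hx : x ∈ O
    · have h1 : HasFDerivAt f (deriv g (U x) • fderiv ℝ U x) x :=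
        ((hg.differentiable one_ne_zero (U x)).hasDerivAt).comp_hasFDerivAt x (hU1 x hx).hasFDerivAt
      rw [h1.fderiv]; simp [hw]
    · rw [(hfev x hx).fderiv_eq]
      have : w x = 0 := by simp only [hw, h0 x hx]; exact hgd 0 ht
      simp [this]
  have hDC : ∀ v, ContDiffOn ℝ 1 (fun x => fderiv ℝ U x v) O := fun v =>
    (hC2.fderiv_of_isOpen hO (by norm_num)).clm_apply contDiffOn_const
  have hibp : ∀ v, ∫ x, w x * (fderiv ℝ U x v) ^ 2 = 
      - ∫ x, f x * fderiv ℝ (fderiv ℝ U) x v v ∧ 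
      Integrable (fun x => f x * fderiv ℝ (fderiv ℝ U) x v v) := by
    intro v
    have hcD : ContinuousOn (fun x => fderiv ℝ U x v) O := (hDC v).continuousOn
    have hdd : ∀ x ∈ O, fderiv ℝ (fun y => fderiv ℝ U y v) x v = fderiv ℝ (fderiv ℝ U) x v v := by
      intro x hx
      have hd : DifferentiableAt ℝ (fderiv ℝ U) x :=
        ((hC2.fderiv_of_isOpen (m := 1) hO (by norm_num)).contDiffAt (hO.mem_nhds hx)).differentiableAt one_ne_zero
      rw [fderiv_clm_apply hd (differentiableAt_const v)]
      simp
    have hcont2 : ContinuousOn (fun x => fderiv ℝ (fun y => fderiv ℝ U y v) x v) O :=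
      ((hDC v).continuousOn_fderiv_of_isOpen hO le_rfl).clm_apply continuousOn_const
    have hpt : (fun x => f x * fderiv ℝ (fun y => fderiv ℝ U y v) x v) = 
        fun x => f x * fderiv ℝ (fderiv ℝ U) x v v := by
      ext x
      by_cases hx : x ∈ O
      · rw [hdd x hx]
      · have : f x = 0 := (hfev x hx).self_of_nhds
        simp [this]
    have hi2 := (pr_cont_mul O hO f _ hfC.continuous hcont2 hfts hfcs).2
    have hp2 : (fun x => fderiv ℝ f x v * fderiv ℝ U x v) = fun x => w x * (fderiv ℝ U x v) ^ 2 := by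
      ext x; rw [hfd]; ring
    have := integral_mul_fderiv_eq_neg_fderiv_mul_of_integrable (μ := volume) (f := f)
      (g := fun y => fderiv ℝ U y v) (v := v)
      (by rw [hp2]; exact (pr_cont_mul O hO w _ hwc (hcD.pow 2) hwts hwcs).2)
      hi2
      (pr_cont_mul O hO f _ hfC.continuous hcD hfts hfcs).2
      (fun x _ => hfC.differentiable one_ne_zero x)
      (fun x hx => ((hDC v).contDiffAt (hO.mem_nhds (hfts hx))).differentiableAt one_ne_zero)
    rw [hp2, hpt] at this
    rw [hpt] at hi2
    exact ⟨by linarith, hi2⟩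
  set e0 : EuclideanSpace ℝ (Fin 2) := EuclideanSpace.single 0 1 with he0
  set e1 : EuclideanSpace ℝ (Fin 2) := EuclideanSpace.single 1 1 with he1
  set n : EuclideanSpace ℝ (Fin 2) → ℝ := fun x => √(fderiv ℝ U x e0 ^ 2 + fderiv ℝ U x e1 ^ 2) with hn
  have hnc : ContinuousOn n O :=
    (((hDC e0).continuousOn.pow 2).add ((hDC e1).continuousOn.pow 2)).sqrt
  have hn2 : ∀ x, n x ^ 2 = fderiv ℝ U x e0 ^ 2 + fderiv ℝ U x e1 ^ 2 := fun x =>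
    Real.sq_sqrt (by positivity)
  have hA : ∫ x, w x * n x ^ 2 = lam * ∫ x, f x * U x := by
    have h1 : ∫ x, w x * n x ^ 2 = (∫ x, w x * (fderiv ℝ U x e0) ^ 2) + ∫ x, w x * (fderiv ℝ U x e1) ^ 2 := by
      have j0 : Integrable (fun x => w x * (fderiv ℝ U x e0) ^ 2) :=
        (pr_cont_mul O hO w _ hwc ((hDC e0).continuousOn.pow 2) hwts hwcs).2
      have j1 : Integrable (fun x => w x * (fderiv ℝ U x e1) ^ 2) :=
        (pr_cont_mul O hO w _ hwc ((hDC e1).continuousOn.pow 2) hwts hwcs).2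
      rw [← integral_add j0 j1]
      congr 1; ext x; rw [hn2, mul_add]
    rw [h1, (hibp e0).1, (hibp e1).1, ← neg_add, ← integral_add (hibp e0).2 (hibp e1).2,
      ← integral_neg, ← integral_const_mul]
    congr 1
    ext x
    by_cases hx : x ∈ O
    · have := hpde x hx
      rw [lap, Fin.sum_univ_two] at this
      rw [← mul_add, this]; ring
    · have : f x = 0 := (hfev x hx).self_of_nhds
      simp [this]
  have hB : 4 * π * ∫ x, f x ^ 2 ≤ (∫ x, w x * n x) ^ 2 := by
    refine (pr_sobolev_E f hfC hfcs (fun x => hg0 _)).trans_eq ?_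
    congr 2
    ext x
    rw [hfd, hfd, mul_pow, mul_pow, ← mul_add, Real.sqrt_mul (sq_nonneg _), Real.sqrt_sq (hw0 x)]
  have i2 : Integrable (fun x => w x * n x ^ 2) := (pr_cont_mul O hO w _ hwc (hnc.pow 2) hwts hwcs).2
  have i1 := (pr_cont_mul O hO w _ hwc hnc hwts hwcs).2
  have i0 := hwc.integrable_of_hasCompactSupport (μ := volume) hwcs
  have hquad : ∀ s : ℝ, 0 ≤ (∫ x, w x) * (s * s) + (-2 * ∫ x, w x * n x) * s + ∫ x, w x * n x ^ 2 := by
    intro s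
    have h1 : 0 ≤ ∫ x, w x * (n x - s) ^ 2 := integral_nonneg fun x => mul_nonneg (hw0 x) (sq_nonneg _)
    have h2 : ∫ x, w x * (n x - s) ^ 2 = ∫ x, (w x * (s * s) + (-2 * s) * (w x * n x) + w x * n x ^ 2) := by
      congr 1; ext x; ring
    have i3 : Integrable (fun x => w x * (s * s) + (-2 * s) * (w x * n x)) :=
      (i0.mul_const _).add (i1.const_mul _)
    rw [h2, integral_add i3 i2, integral_add (i0.mul_const _) (i1.const_mul _), integral_mul_const, integral_const_mul] at h1
    linarith
  have hdisc := discrim_le_zero hquad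
  rw [discrim] at hdisc
  rw [hA] at hdisc
  nlinarith

lemma pr_inner (ε s b : ℝ) (hε : 0 < ε) (hs : 0 ≤ s) (hsb : s ≤ b) :
    (s ^ 2 - 2 * ε * s) / 2 ≤ ∫ t in (0 : ℝ)..b, t * smoothTransition ((s - t) / ε) ^ 2 := by
  have hc : Continuous fun t => t * smoothTransition ((s - t) / ε) ^ 2 := by
    have := Real.smoothTransition.continuous
    fun_prop
  by_cases h : s ≤ ε
  · have : 0 ≤ ∫ t in (0 : ℝ)..b, t * smoothTransition ((s - t) / ε) ^ 2 :=
      intervalIntegral.integral_nonneg (hs.trans hsb) fun t ht => mul_nonneg ht.1 (sq_nonneg _)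
    nlinarith
  · push Not at h
    rw [← intervalIntegral.integral_add_adjacent_intervals (b := s - ε)
      (hc.intervalIntegrable _ _) (hc.intervalIntegrable _ _)]
    have h1 : 0 ≤ ∫ t in (s - ε)..b, t * smoothTransition ((s - t) / ε) ^ 2 :=
      intervalIntegral.integral_nonneg (by linarith) fun t ht =>
        mul_nonneg (by linarith [ht.1]) (sq_nonneg _)
    have h2 : ∫ t in (0 : ℝ)..(s - ε), t * smoothTransition ((s - t) / ε) ^ 2 =
        ∫ t in (0 : ℝ)..(s - ε), t := by
      apply intervalIntegral.integral_congr
      intro t ht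
      rw [Set.uIcc_of_le (by linarith)] at ht
      have : smoothTransition ((s - t) / ε) = 1 := by
        apply smoothTransition.one_of_one_le
        rw [le_div_iff₀ hε]
        linarith [ht.2]
      simp only [this]
      ring
    rw [h2, integral_id]
    nlinarith [sq_nonneg ε]

lemma pr_eps (O : Set (EuclideanSpace ℝ (Fin 2))) (hO : IsOpen O) (lam : ℝ) (hlam : 0 < lam)
    (U : EuclideanSpace ℝ (Fin 2) → ℝ) (hUc : Continuous U) (hcs : HasCompactSupport U)
    (h0 : ∀ x, x ∉ O → U x = 0) (hU0 : ∀ x, 0 ≤ U x) (hC2 : ContDiffOn ℝ 2 U O)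
    (hpde : ∀ x ∈ O, lap U x = -(lam * U x)) (ε : ℝ) (hε : 0 < ε) :
    2 * π * ((∫ x, U x ^ 2) - 2 * ε * ∫ x, U x) ≤ lam / 2 * (∫ x, U x) ^ 2 := by
  have hpi := Real.pi_pos
  obtain ⟨b, hb⟩ := hcs.exists_bound_of_continuous hUc
  have hUb : ∀ x, U x ≤ b := fun x => (le_abs_self _).trans (hb x)
  have hb0 : 0 ≤ b := (hU0 0).trans (hUb 0)
  have hUi : Integrable U := hUc.integrable_of_hasCompactSupport hcs
  have hU2i : Integrable (fun x => U x ^ 2) := by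
    apply (by fun_prop : Continuous fun x => U x ^ 2).integrable_of_hasCompactSupport
    exact hcs.comp_left (g := fun s : ℝ => s ^ 2) (by simp)
  set S := smoothTransition with hS
  have hSc : Continuous S := smoothTransition.continuous
  have hSC : ContDiff ℝ 1 S := smoothTransition.contDiff (n := 1)
  have hS'c : Continuous (deriv S) := hSC.continuous_deriv le_rfl
  have hS'0 : ∀ s, s ≤ 0 → deriv S s = 0 := by
    have hlt : ∀ s, s < 0 → deriv S s = 0 := by
      intro s hs
      have : S =ᶠ[nhds s] fun _ => 0 := by
        filter_upwards [Iio_mem_nhds hs] with z hz using smoothTransition.zero_of_nonpos (le_of_lt hz)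
      rw [this.deriv_eq]; simp
    intro s hs
    have hcl : IsClosed {s | deriv S s = 0} := isClosed_eq hS'c continuous_const
    have : closure (Set.Iio (0 : ℝ)) ⊆ {s | deriv S s = 0} := closure_minimal hlt hcl
    rw [closure_Iio] at this
    exact this hs
  have hS'1 : ∀ s, 1 < s → deriv S s = 0 := by
    intro s hs
    have : S =ᶠ[nhds s] fun _ => 1 := by
      filter_upwards [Ioi_mem_nhds hs] with z hz using smoothTransition.one_of_one_le (le_of_lt hz)
    rw [this.deriv_eq]; simp
  have hS'n : ∀ s, 0 ≤ deriv S s := fun s => smoothTransition.monotone.deriv_nonneg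
  have hS'cs : HasCompactSupport (deriv S) := by
    apply HasCompactSupport.intro (isCompact_Icc (a := (0 : ℝ)) (b := 1))
    intro s hs
    by_cases h : s ≤ 0
    · exact hS'0 s h
    · apply hS'1
      by_contra hcon
      push Not at h hcon
      exact hs ⟨h.le, hcon⟩
  obtain ⟨C, hC⟩ := hS'cs.exists_bound_of_continuous hS'c
  set W : ℝ → ℝ := fun t => ∫ x, S ((U x - t) / ε) * U x with hW
  set V : ℝ → ℝ := fun t => ∫ x, deriv S ((U x - t) / ε) / ε * U x with hV
  have hSi : ∀ t, Integrable fun x => S ((U x - t) / ε) * U x := by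
    intro t
    apply Continuous.integrable_of_hasCompactSupport (by fun_prop)
    exact hcs.mul_left
  have hS'i : ∀ t, Integrable fun x => deriv S ((U x - t) / ε) / ε * U x := by
    intro t
    apply Continuous.integrable_of_hasCompactSupport (by fun_prop)
    exact hcs.mul_left
  have hgd : ∀ s t : ℝ, HasDerivAt (fun s => S ((s - t) / ε)) (deriv S ((s - t) / ε) / ε) s := by
    intro s t
    have h1 : HasDerivAt (fun s : ℝ => (s - t) / ε) (1 / ε) s :=
      ((hasDerivAt_id s).sub_const t).div_const ε
    have := ((hSC.differentiable one_ne_zero ((s - t) / ε)).hasDerivAt).comp s h1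
    refine this.congr_deriv (by ring)
  have hWd : ∀ t, HasDerivAt W (-V t) t := by
    intro t
    have := (hasDerivAt_integral_of_dominated_loc_of_deriv_le (μ := volume) (x₀ := t)
      (F := fun t x => S ((U x - t) / ε) * U x)
      (F' := fun t x => -(deriv S ((U x - t) / ε) / ε * U x))
      (s := Set.univ) (bound := fun x => C / ε * U x) Filter.univ_mem
      (Filter.Eventually.of_forall fun t => (hSi t).aestronglyMeasurable) (hSi t)
      (hS'i t).neg.aestronglyMeasurable
      (Filter.Eventually.of_forall fun x t _ => ?_) (hUi.const_mul _)
      (Filter.Eventually.of_forall fun x t _ => ?_)).2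
    · rw [integral_neg] at this
      exact this
    · rw [norm_neg, norm_mul, norm_div, Real.norm_of_nonneg (hU0 x), Real.norm_of_nonneg hε.le]
      gcongr
      · exact hU0 x
      · exact hC _
    · have h1 : HasDerivAt (fun t : ℝ => (U x - t) / ε) (-1 / ε) t :=
        ((hasDerivAt_id t).const_sub (U x)).div_const ε
      have := (((hSC.differentiable one_ne_zero ((U x - t) / ε)).hasDerivAt).comp t h1).mul_const (U x)
      refine this.congr_deriv (by ring)
  have hW0 : ∀ t, 0 ≤ W t := fun t => integral_nonneg fun x =>
    mul_nonneg (smoothTransition.nonneg _) (hU0 x)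
  have hWc : Continuous W := continuous_iff_continuousAt.2 fun t => (hWd t).continuousAt
  -- the joint function
  set Q : ℝ → EuclideanSpace ℝ (Fin 2) → ℝ := fun t x => t * S ((U x - t) / ε) ^ 2 with hQ
  have hQi : Integrable (Function.uncurry Q) ((volume.restrict (Set.Ioc 0 b)).prod volume) := by
    have hdom : Integrable (fun z : ℝ × EuclideanSpace ℝ (Fin 2) => U z.2)
      ((volume.restrict (Set.Ioc 0 b)).prod volume) := hUi.comp_snd _
    refine hdom.mono' ?_ ?_
    · apply Continuous.aestronglyMeasurable
      simp only [Function.uncurry_def, hQ]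
      fun_prop
    · have : ∀ᵐ z ∂((volume.restrict (Set.Ioc 0 b)).prod (volume : Measure (EuclideanSpace ℝ (Fin 2)))),
          z.1 ∈ Set.Ioc 0 b := by
        apply Measure.quasiMeasurePreserving_fst.ae
        exact ae_restrict_mem measurableSet_Ioc
      filter_upwards [this] with z hz
      simp only [Function.uncurry_def, hQ]
      have hz0 := hz.1
      rw [Real.norm_of_nonneg (by positivity)]
      by_cases h : U z.2 ≤ z.1
      · rw [hS, smoothTransition.zero_of_nonpos (div_nonpos_of_nonpos_of_nonneg (by linarith) hε.le)]
        simpa using hU0 _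
      · push Not at h
        have h1 : S ((U z.2 - z.1) / ε) ^ 2 ≤ 1 :=
          pow_le_one₀ (smoothTransition.nonneg _) (smoothTransition.le_one _)
        nlinarith
  have hφi : IntegrableOn (fun t => 4 * π * ∫ x, Q t x) (Set.Icc 0 b) := by
    rw [integrableOn_Icc_iff_integrableOn_Ioc]
    exact hQi.integral_prod_left.const_mul _
  have hmain : ∀ t ∈ Set.Ioo 0 b, 4 * π * ∫ x, Q t x ≤ lam * (W t * V t) := by
    intro t ht
    have h1 := pr_level O hO lam U hUc hcs h0 hC2 hpde (fun s => S ((s - t) / ε))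
      (by fun_prop) (fun a b hab => smoothTransition.monotone (by gcongr)) t ht.1
      (fun s hs => smoothTransition.zero_of_nonpos (div_nonpos_of_nonpos_of_nonneg (by linarith) hε.le))
      (fun s => smoothTransition.nonneg _)
    simp only [(hgd _ t).deriv] at h1
    have h2 : t * ∫ x, deriv S ((U x - t) / ε) / ε ≤ V t := by
      rw [← integral_const_mul]
      apply integral_mono_of_nonneg
      · exact Filter.Eventually.of_forall fun x => mul_nonneg ht.1.le (div_nonneg (hS'n _) hε.le)
      · exact hS'i t
      · refine Filter.Eventually.of_forall fun x => ?_
        simp only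
        by_cases h : U x ≤ t
        · rw [hS'0 _ (div_nonpos_of_nonpos_of_nonneg (by linarith) hε.le)]; simp
        · push Not at h
          rw [mul_comm]
          exact mul_le_mul_of_nonneg_left h.le (div_nonneg (hS'n _) hε.le)
    have h3 : ∫ x, Q t x = t * ∫ x, S ((U x - t) / ε) ^ 2 := by
      rw [← integral_const_mul]
    have h4 : ∫ x, S ((U x - t) / ε) * U x = W t := rfl
    rw [h4] at h1
    rw [h3]
    calc 4 * π * (t * ∫ x, S ((U x - t) / ε) ^ 2) = t * (4 * π * ∫ x, S ((U x - t) / ε) ^ 2) := by ring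
      _ ≤ t * (lam * W t * ∫ x, deriv S ((U x - t) / ε) / ε) := mul_le_mul_of_nonneg_left h1 ht.1.le
      _ = lam * W t * (t * ∫ x, deriv S ((U x - t) / ε) / ε) := by ring
      _ ≤ lam * W t * V t := mul_le_mul_of_nonneg_left h2 (mul_nonneg hlam.le (hW0 t))
      _ = _ := by ring
  have hint := intervalIntegral.integral_le_sub_of_hasDeriv_right_of_le
    (g := fun t => -(lam / 2) * W t ^ 2) (g' := fun t => lam * (W t * V t)) hb0 (by fun_prop)
    (fun t _ => by
      have := (((hWd t).pow 2).const_mul (-(lam / 2))).hasDerivWithinAt (s := Set.Ioi t)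
      refine this.congr_deriv ?_
      push_cast
      ring) hφi hmain
  rw [intervalIntegral.integral_const_mul, intervalIntegral.integral_of_le hb0,
    integral_integral_swap hQi] at hint
  have hlow : ((∫ x, U x ^ 2) - 2 * ε * ∫ x, U x) / 2 ≤ ∫ x, ∫ t in Set.Ioc 0 b, Q t x := by
    have j1 : Integrable (fun x => (U x ^ 2 - 2 * ε * U x) / 2) :=
      (hU2i.sub (hUi.const_mul _)).div_const _
    have : ((∫ x, U x ^ 2) - 2 * ε * ∫ x, U x) / 2 = ∫ x, (U x ^ 2 - 2 * ε * U x) / 2 := by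
      rw [integral_div, integral_sub hU2i (hUi.const_mul _), integral_const_mul]
    rw [this]
    refine integral_mono j1 hQi.integral_prod_right fun x => ?_
    have := pr_inner ε (U x) b hε (hU0 x) (hUb x)
    rw [intervalIntegral.integral_of_le hb0] at this
    exact this
  have hWA : W 0 ≤ ∫ x, U x := by
    refine integral_mono (hSi 0) hUi fun x => ?_
    exact mul_le_of_le_one_left (hU0 x) (smoothTransition.le_one _)
  have hW2 : W 0 ^ 2 ≤ (∫ x, U x) ^ 2 := pow_le_pow_left₀ (hW0 0) hWA 2
  have h5 : 4 * π * (((∫ x, U x ^ 2) - 2 * ε * ∫ x, U x) / 2) ≤ 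
      4 * π * ∫ x, ∫ t in Set.Ioc 0 b, Q t x := mul_le_mul_of_nonneg_left hlow (by positivity)
  nlinarith [mul_nonneg hlam.le (sq_nonneg (W b)), mul_le_mul_of_nonneg_left hW2 hlam.le]

theorem eigenfunction_isoperimetric_inequality
    (O : Set (EuclideanSpace ℝ (Fin 2))) (hne : O.Nonempty) (hO : IsOpen O)
    (hb : Bornology.IsBounded O) (hsb : SmoothBoundary O)
    (hsc : SimplyConnectedSpace O)
    (lam : ℝ) (hlam : 0 < lam)
    (u : EuclideanSpace ℝ (Fin 2) → ℝ)
    (hcont : ContinuousOn u (closure O)) (hC1 : ContDiffOn ℝ 1 u (closure O))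
    (hC2 : ContDiffOn ℝ 2 u O)
    (hpde : ∀ x ∈ O, lap u x = -(lam * u x)) (hpos : ∀ x ∈ O, 0 < u x)
    (hbd : ∀ x ∈ frontier O, u x = 0) :
    ∫ x in O, u x ^ 2 ≤ (lam / (4 * π)) * (∫ x in O, u x) ^ 2 := by
  have hpi := Real.pi_pos
  set U : EuclideanSpace ℝ (Fin 2) → ℝ := O.indicator u with hU
  have hUin : ∀ x ∈ O, U x = u x := fun x hx => Set.indicator_of_mem hx u
  have hUout : ∀ x, x ∉ O → U x = 0 := fun x hx => Set.indicator_of_notMem hx u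
  have hUev : ∀ x ∈ O, U =ᶠ[nhds x] u := fun x hx => by
    filter_upwards [hO.mem_nhds hx] with z hz using hUin z hz
  have hUc : Continuous U := continuous_indicator hbd hcont
  have hcs : HasCompactSupport U := by
    apply HasCompactSupport.intro hb.isCompact_closure
    intro x hx
    exact hUout x fun h => hx (subset_closure h)
  have hU0 : ∀ x, 0 ≤ U x := fun x => Set.indicator_nonneg (fun x hx => (hpos x hx).le) x
  have hUC2 : ContDiffOn ℝ 2 U O := hC2.congr hUin
  have hUpde : ∀ x ∈ O, lap U x = -(lam * U x) := by
    intro x hx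
    rw [hUin x hx, ← hpde x hx, lap, lap, (hUev x hx).fderiv.fderiv_eq]
  have hA : ∫ x in O, u x = ∫ x, U x := (integral_indicator hO.measurableSet).symm
  have hB : ∫ x in O, u x ^ 2 = ∫ x, U x ^ 2 := by
    rw [← integral_indicator hO.measurableSet]
    congr 1
    ext x
    by_cases hx : x ∈ O <;> simp [hU, hx]
  rw [hA, hB]
  set A := ∫ x, U x with hAdef
  have hA0 : 0 ≤ A := integral_nonneg hU0
  have hmain : 2 * π * ∫ x, U x ^ 2 ≤ lam / 2 * A ^ 2 := by
    apply le_of_forall_pos_le_add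
    intro δ hδ
    have hden : 0 < 4 * π * (A + 1) := by positivity
    have := pr_eps O hO lam hlam U hUc hcs hUout hU0 hUC2 hUpde (δ / (4 * π * (A + 1)))
      (by positivity)
    rw [← hAdef] at this
    have h2 : 2 * π * (2 * (δ / (4 * π * (A + 1))) * A) ≤ δ := by
      have : 2 * π * (2 * (δ / (4 * π * (A + 1))) * A) = δ * (A / (A + 1)) := by
        field_simp
        try ring
      rw [this]
      apply mul_le_of_le_one_right hδ.le
      rw [div_le_one (by positivity)]
      linarith
    linarith
  rw [div_mul_eq_mul_div, le_div_iff₀ (by positivity)]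
  linarith
end
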